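/- Nondegeneracy on Kirchhoff stream functions, I (Fourier characterization). Fix ξ > 0 and define Ψ^ξ : ℝ² → ℝ by Ψ^ξ(x) = (1/2π)∫_{E^ξ} log‖x−y‖ dy − Ω^ξ‖x‖²/2. Let φ : Σ^ξ → ℝ be continuous with 2-fold dihedral symmetry, i.e. φ(x₁,x₂) = φ(x₁,−x₂) = φ(−x₁,−x₂) for all (x₁,x₂) ∈ Σ^ξ; define ρ : ℝ → ℝ by ρ(η) = φ(cos η, tanh(ξ) sin η) and its Fourier coefficients ρ̂(k) = (1/2π)∫₀^{2π} ρ(η) e^{−ikη} dη for k ∈ ℤ. Then the following are equivalent: (i) for all x ∈ Σ^ξ, φ(x) + ∫_{Σ^ξ} (1/2π) log‖x−y‖ · (φ(y)/‖∇Ψ^ξ(y)‖) dℋ¹(y) = 0; (ii) (sinh(2ξ) − 2e^{2ξ} log(1+e^{−2ξ}))·ρ̂(0) = 0, and (|k| sinh(2ξ) − e^{2ξ}(1+e^{−2ξ|k|}))·ρ̂(k) = 0 for every k ∈ ℤ ∖ {0}. -/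

import Mathlib

open MeasureTheory Real

noncomputable section

/-- The Euclidean plane. -/
abbrev Pt := EuclideanSpace ℝ (Fin 2)

/-- The point of the plane with the given coordinates. -/
def pt (a b : ℝ) : Pt := (WithLp.equiv 2 (Fin 2 → ℝ)).symm ![a, b]

/-- The open ellipse `E^ξ = {x : x₁² + (x₂ / tanh ξ)² < 1}`. -/
def Eell (ξ : ℝ) : Set Pt := {x : Pt | (x 0) ^ 2 + (x 1 / Real.tanh ξ) ^ 2 < 1}

/-- The angular velocity `Ω^ξ = tanh ξ / (1 + tanh ξ)²` of the `ξ`-Kirchhoff vortex. -/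
def Ωell (ξ : ℝ) : ℝ := Real.tanh ξ / (1 + Real.tanh ξ) ^ 2

/-- The elliptical coordinates map
`(ζ, η) ↦ (sech ξ · cosh ζ · cos η, sech ξ · sinh ζ · sin η)`. -/
def ept (ξ ζ η : ℝ) : Pt :=
  pt ((Real.cosh ξ)⁻¹ * Real.cosh ζ * Real.cos η)
    ((Real.cosh ξ)⁻¹ * Real.sinh ζ * Real.sin η)

/-- The relative stream function of the `ξ`-Kirchhoff vortex (without the
additive normalization constant). -/
def Ψell (ξ : ℝ) (x : Pt) : ℝ :=
  (1 / (2 * π)) * (∫ y in Eell ξ, Real.log ‖x - y‖) - Ωell ξ * ‖x‖ ^ 2 / 2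

/-! On `Σ^ξ`, parametrized by `η ↦ (cos η, t sin η)` with `t = tanh ξ`, the Cauchy transform of the
elliptic disk, and hence `∇Ψ^ξ`, is real-linear in the coordinates, and `‖∇Ψ^ξ‖` is `Ω^ξ` times the
speed of the parametrization. The integral against `dℋ¹ / ‖∇Ψ^ξ‖` therefore becomes one against
`dη / Ω^ξ`. With `q = e^{-2ξ}`, the Joukowski map factors the distance as
`|x - y| = |1 - e^{i(α - β)}| |1 - q e^{i(α + β)}| / (1 + q)`, and evenness of the density turns
`α + β` into `α - β`, so the logarithmic potential is a convolution on the circle. Since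
`log |1 - r e^{iθ}| = -∑_{k ≠ 0} r^{|k|} / (2|k|) e^{ikθ}`, also in the limit `r → 1`, taking
Fourier coefficients diagonalizes the equation. -/

/-! ### The logarithmic potential of a bounded planar set -/

section LogPotential

lemma integrableOn_norm_sub_rpow_and_integral_le {E : Type*} [NormedAddCommGroup E]
    [NormedSpace ℝ E] [FiniteDimensional ℝ E] [MeasurableSpace E] [BorelSpace E]
    (μ : Measure E) [μ.IsAddHaarMeasure] {s : ℝ} (hs : 0 ≤ s) (hsE : s < Module.finrank ℝ E)
    {D : Set E} (hD : μ D ≠ ⊤) :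
    ∃ M : ℝ, ∀ z : E, IntegrableOn (fun w => ‖z - w‖ ^ (-s)) D μ ∧
      ∫ w in D, ‖z - w‖ ^ (-s) ∂μ ≤ M := by
  set G : E → ℝ := (Metric.ball 0 1).indicator fun w => ‖w‖ ^ (-s)
  have hG0 : ∀ w, 0 ≤ G w := fun w => Set.indicator_nonneg (fun _ _ => by positivity) w
  have hmeas : Measurable fun w : E => ‖w‖ ^ (-s) := by fun_prop
  have hGint : Integrable G μ := by
    refine (integrable_indicator_iff Metric.isOpen_ball.measurableSet).2 ?_
    refine integrableOn_ball_of_norm_le_rpow (C := 1) ?_ hsE ?_ hmeas.aestronglyMeasurable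
    · exact_mod_cast hs.trans_lt hsE
    · refine .of_forall fun w => ?_
      rw [one_mul, Real.norm_of_nonneg (by positivity)]
  have hle : ∀ w : E, ‖w‖ ^ (-s) ≤ G w + 1 := by
    intro w
    by_cases h : w ∈ Metric.ball (0 : E) 1
    · simp only [G, Set.indicator_of_mem h, le_add_iff_nonneg_right, zero_le_one]
    · rw [mem_ball_zero_iff, not_lt] at h
      linarith [hG0 w, rpow_le_one_of_one_le_of_nonpos h (neg_nonpos.2 hs)]
  have hmajor : ∀ z : E, IntegrableOn (fun w => G (z - w) + 1) D μ := fun z =>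
    (hGint.comp_sub_left z).integrableOn.add (integrableOn_const hD)
  refine ⟨(∫ w, G w ∂μ) + ∫ _ in D, (1 : ℝ) ∂μ, fun z => ?_⟩
  have hint : IntegrableOn (fun w => ‖z - w‖ ^ (-s)) D μ := by
    refine (hmajor z).mono' (hmeas.comp (measurable_const.sub measurable_id)).aestronglyMeasurable
      (.of_forall fun w => ?_)
    rw [Real.norm_of_nonneg (by positivity)]
    exact hle _
  refine ⟨hint, ?_⟩
  calc ∫ w in D, ‖z - w‖ ^ (-s) ∂μ
      ≤ ∫ w in D, (G (z - w) + 1) ∂μ := integral_mono hint (hmajor z) fun w => hle _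
    _ = (∫ w in D, G (z - w) ∂μ) + ∫ _ in D, (1 : ℝ) ∂μ :=
        integral_add (hGint.comp_sub_left z).integrableOn (integrableOn_const hD)
    _ ≤ (∫ w, G (z - w) ∂μ) + ∫ _ in D, (1 : ℝ) ∂μ :=
        add_le_add_left
          (setIntegral_le_integral (hGint.comp_sub_left z) (.of_forall fun w => hG0 _)) _
    _ = (∫ w, G w ∂μ) + ∫ _ in D, (1 : ℝ) ∂μ := by rw [integral_sub_left_eq_self G μ z]

lemma rpow_three_halves {r : ℝ} (hr : 0 ≤ r) : r ^ (3 / 2 : ℝ) = r * √r := by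
  rw [sqrt_eq_rpow, ← rpow_one_add' hr (by norm_num)]
  norm_num

lemma abs_log_norm_add_sub_le_of_norm_le_half {a h : ℂ} (ha : a ≠ 0) (hah : a + h ≠ 0)
    (hsmall : ‖h‖ / ‖a‖ ≤ 1 / 2) :
    |log ‖a + h‖ - log ‖a‖ - (h / a).re| ≤ 2 * (‖h‖ / ‖a‖) ^ (3 / 2 : ℝ) := by
  set u : ℂ := h / a
  have hu : ‖u‖ ≤ 1 / 2 := by rwa [norm_div]
  have hfactor : a + h = a * (1 + u) := by simp only [u]; field_simp
  have hu1 : 1 + u ≠ 0 := right_ne_zero_of_mul (hfactor ▸ hah)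
  have hlog : log ‖a + h‖ - log ‖a‖ = (Complex.log (1 + u)).re := by
    rw [Complex.log_re, hfactor, norm_mul, log_mul (norm_ne_zero_iff.2 ha)
      (norm_ne_zero_iff.2 hu1), add_sub_cancel_left]
  have hinv : (1 - ‖u‖)⁻¹ ≤ 2 := by
    rw [inv_le_comm₀ (by linarith) two_pos]
    linarith
  have hsqrt : ‖u‖ ≤ √‖u‖ := le_sqrt_of_sq_le (by nlinarith [norm_nonneg u])
  calc |log ‖a + h‖ - log ‖a‖ - u.re|
      = |(Complex.log (1 + u) - u).re| := by rw [hlog, Complex.sub_re]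
    _ ≤ ‖Complex.log (1 + u) - u‖ := Complex.abs_re_le_norm _
    _ ≤ ‖u‖ ^ 2 * (1 - ‖u‖)⁻¹ / 2 := Complex.norm_log_one_add_sub_self_le (by linarith)
    _ ≤ ‖u‖ ^ 2 * 2 / 2 := by gcongr
    _ = ‖u‖ * ‖u‖ := by ring
    _ ≤ ‖u‖ * √‖u‖ := by gcongr
    _ ≤ 2 * (‖h‖ / ‖a‖) ^ (3 / 2 : ℝ) := by
        rw [← norm_div, rpow_three_halves (norm_nonneg _)]
        nlinarith [norm_nonneg u, sqrt_nonneg ‖u‖, mul_nonneg (norm_nonneg u) (sqrt_nonneg ‖u‖)]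

lemma abs_log_norm_add_sub_le_of_half_lt_norm {a h : ℂ} (ha : a ≠ 0) (hah : a + h ≠ 0)
    (hlarge : 1 / 2 < ‖h‖ / ‖a‖) :
    |log ‖a + h‖ - log ‖a‖ - (h / a).re| ≤
      4 * ((‖h‖ / ‖a‖) ^ (3 / 2 : ℝ) + (‖h‖ / ‖a + h‖) ^ (3 / 2 : ℝ)) := by
  have ha0 : 0 < ‖a‖ := norm_pos_iff.2 ha
  have hah0 : 0 < ‖a + h‖ := norm_pos_iff.2 hah
  have hlin : ∀ r : ℝ, 1 / 4 ≤ r → r ≤ 2 * r ^ (3 / 2 : ℝ) := by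
    intro r hr
    have hsqrt : 1 / 2 ≤ √r := le_sqrt_of_sq_le (by linarith)
    rw [rpow_three_halves (by linarith)]
    nlinarith
  have hh : ‖a‖ < 2 * ‖h‖ := by
    rw [lt_div_iff₀ ha0] at hlarge
    linarith
  have hnear : ‖h‖ / ‖a‖ ≤ 2 * (‖h‖ / ‖a‖) ^ (3 / 2 : ℝ) := hlin _ (by linarith)
  have hfar : ‖h‖ / ‖a + h‖ ≤ 2 * (‖h‖ / ‖a + h‖) ^ (3 / 2 : ℝ) := by
    refine hlin _ ?_
    rw [le_div_iff₀ hah0]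
    linarith [norm_add_le a h]
  have hupper : log ‖a + h‖ - log ‖a‖ ≤ ‖h‖ / ‖a‖ := by
    rw [← log_div hah0.ne' ha0.ne']
    refine (log_le_sub_one_of_pos (by positivity)).trans ?_
    rw [div_sub_one ha0.ne']
    gcongr
    linarith [norm_add_le a h]
  have hlower : log ‖a‖ - log ‖a + h‖ ≤ ‖h‖ / ‖a + h‖ := by
    rw [← log_div ha0.ne' hah0.ne']
    refine (log_le_sub_one_of_pos (by positivity)).trans ?_
    rw [div_sub_one hah0.ne']
    gcongr
    linarith [norm_le_add_norm_add a h]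
  have hre : |(h / a).re| ≤ ‖h‖ / ‖a‖ := norm_div h a ▸ Complex.abs_re_le_norm _
  have hpos : 0 ≤ (‖h‖ / ‖a + h‖) ^ (3 / 2 : ℝ) := by positivity
  rw [abs_le] at hre ⊢
  constructor <;> linarith [hre.1, hre.2]

/-- The exponent `3 / 2` lies strictly between `1`, which makes the error `o(h)`, and `2`, which
keeps it integrable over the plane. -/
lemma abs_log_norm_add_sub_le {a h : ℂ} (ha : a ≠ 0) (hah : a + h ≠ 0) :
    |log ‖a + h‖ - log ‖a‖ - (h / a).re| ≤
      4 * ((‖h‖ / ‖a‖) ^ (3 / 2 : ℝ) + (‖h‖ / ‖a + h‖) ^ (3 / 2 : ℝ)) := by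
  rcases le_or_gt (‖h‖ / ‖a‖) (1 / 2) with hsmall | hlarge
  · have h₁ : 0 ≤ (‖h‖ / ‖a‖) ^ (3 / 2 : ℝ) := by positivity
    have h₂ : 0 ≤ (‖h‖ / ‖a + h‖) ^ (3 / 2 : ℝ) := by positivity
    linarith [abs_log_norm_add_sub_le_of_norm_le_half ha hah hsmall]
  · exact abs_log_norm_add_sub_le_of_half_lt_norm ha hah hlarge

lemma integrableOn_inv_sub {D : Set ℂ} (hD : volume D ≠ ⊤) (z : ℂ) :
    IntegrableOn (fun w => (z - w)⁻¹) D := by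
  obtain ⟨_, hM⟩ := integrableOn_norm_sub_rpow_and_integral_le volume zero_le_one
    (by simp [Complex.finrank_real_complex]) hD
  refine (hM z).1.mono' (by fun_prop) (.of_forall fun w => ?_)
  rw [norm_inv, rpow_neg_one]

lemma integrableOn_log_norm_sub {D : Set ℂ} (hDm : MeasurableSet D)
    (hDb : Bornology.IsBounded D) (z : ℂ) :
    IntegrableOn (fun w => log ‖z - w‖) D := by
  obtain ⟨_, hM⟩ := integrableOn_norm_sub_rpow_and_integral_le volume zero_le_one
    (by simp [Complex.finrank_real_complex]) hDb.measure_lt_top.ne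
  obtain ⟨R, hR⟩ := hDb.exists_norm_le
  refine ((hM z).1.add (integrableOn_const (C := ‖z‖ + R) hDb.measure_lt_top.ne)).mono'
    (Measurable.aestronglyMeasurable (by fun_prop)) ?_
  filter_upwards [ae_restrict_mem hDm] with w hw
  have hr := norm_nonneg (z - w)
  have hupper : log ‖z - w‖ ≤ ‖z - w‖ := log_le_self hr
  have hlower : -‖z - w‖⁻¹ ≤ log ‖z - w‖ := neg_inv_le_log hr
  have htri : ‖z - w‖ ≤ ‖z‖ + R := (norm_sub_le _ _).trans (by linarith [hR w hw])
  simp only [Pi.add_apply, rpow_neg_one, Real.norm_eq_abs, abs_le]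
  constructor <;> linarith [inv_nonneg.2 hr]

lemma abs_log_potential_add_sub_le {D : Set ℂ} (hDm : MeasurableSet D)
    (hDb : Bornology.IsBounded D) :
    ∃ M : ℝ, ∀ z h : ℂ,
      |(∫ w in D, log ‖z + h - w‖) - (∫ w in D, log ‖z - w‖) - (h * ∫ w in D, (z - w)⁻¹).re| ≤
        M * ‖h‖ ^ (3 / 2 : ℝ) := by
  obtain ⟨M, hM⟩ := integrableOn_norm_sub_rpow_and_integral_le volume (s := 3 / 2) (by norm_num)
    (by norm_num [Complex.finrank_real_complex]) hDb.measure_lt_top.ne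
  refine ⟨8 * M, fun z h => ?_⟩
  have hlog := integrableOn_log_norm_sub hDm hDb
  have hdiff : IntegrableOn (fun w => log ‖z + h - w‖ - log ‖z - w‖) D :=
    (hlog (z + h)).sub (hlog z)
  have hinv := (integrableOn_inv_sub hDb.measure_lt_top.ne z).const_mul h
  have hinv_re : IntegrableOn (fun w => (h * (z - w)⁻¹).re) D := hinv.re
  have hlin : (h * ∫ w in D, (z - w)⁻¹).re = ∫ w in D, (h * (z - w)⁻¹).re := by
    rw [← integral_const_mul]
    exact (integral_re hinv).symm
  have hmajor := ((hM z).1.add (hM (z + h)).1).const_mul (4 * ‖h‖ ^ (3 / 2 : ℝ))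
  have hne : ∀ c : ℂ, ∀ᵐ w ∂volume.restrict D, w ≠ c := fun c =>
    ae_restrict_of_ae (Measure.ae_ne volume c)
  have htaylor : ∀ᵐ w ∂volume.restrict D,
      ‖log ‖z + h - w‖ - log ‖z - w‖ - (h * (z - w)⁻¹).re‖ ≤
        4 * ‖h‖ ^ (3 / 2 : ℝ) * (‖z - w‖ ^ (-(3 / 2) : ℝ) + ‖z + h - w‖ ^ (-(3 / 2) : ℝ)) := by
    filter_upwards [hne z, hne (z + h)] with w hz hzh
    have hshift : z - w + h = z + h - w := by ring
    have := abs_log_norm_add_sub_le (sub_ne_zero.2 hz.symm) (hshift ▸ sub_ne_zero.2 hzh.symm)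
    rw [hshift, div_eq_mul_inv, div_rpow (norm_nonneg _) (norm_nonneg _),
      div_rpow (norm_nonneg _) (norm_nonneg _)] at this
    refine this.trans_eq ?_
    rw [rpow_neg (norm_nonneg _), rpow_neg (norm_nonneg _)]
    ring
  rw [hlin, ← integral_sub (hlog (z + h)) (hlog z), ← integral_sub hdiff hinv_re]
  refine (norm_integral_le_of_norm_le hmajor htaylor).trans ?_
  rw [integral_const_mul]
  simp only [Pi.add_apply]
  rw [integral_add (hM z).1 (hM (z + h)).1]
  have hh : 0 ≤ ‖h‖ ^ (3 / 2 : ℝ) := by positivity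
  nlinarith [(hM z).2, (hM (z + h)).2]

lemma hasFDerivAt_log_potential {D : Set ℂ} (hDm : MeasurableSet D)
    (hDb : Bornology.IsBounded D) (z : ℂ) :
    HasFDerivAt (fun z => ∫ w in D, log ‖z - w‖)
      (Complex.reCLM.comp (ContinuousLinearMap.mul ℝ ℂ (∫ w in D, (z - w)⁻¹))) z := by
  obtain ⟨M, hM⟩ := abs_log_potential_add_sub_le hDm hDb
  rw [hasFDerivAt_iff_isLittleO_nhds_zero]
  refine (Asymptotics.IsBigO.of_bound (g := fun h : ℂ => ‖h‖ ^ (3 / 2 : ℝ)) M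
    (.of_forall fun h => ?_)).trans_isLittleO ?_
  · rw [Real.norm_of_nonneg (show 0 ≤ ‖h‖ ^ (3 / 2 : ℝ) by positivity)]
    simpa only [ContinuousLinearMap.comp_apply, ContinuousLinearMap.mul_apply', mul_comm h,
      Complex.reCLM_apply, Real.norm_eq_abs] using hM z h
  · have hsqrt : (fun h : ℂ => √‖h‖) =o[nhds 0] fun _ => (1 : ℝ) := by
      rw [Asymptotics.isLittleO_one_iff]
      simpa using (continuous_norm.sqrt : Continuous fun h : ℂ => √‖h‖).tendsto 0
    have hid : (fun h : ℂ => ‖h‖) =O[nhds 0] fun h => ‖h‖ := Asymptotics.isBigO_refl _ _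
    rw [← Asymptotics.isLittleO_norm_right]
    simpa only [rpow_three_halves (norm_nonneg _), mul_one] using hid.mul_isLittleO hsqrt

end LogPotential

/-! ### The Cauchy transform of an elliptic disk -/

section CauchyTransform

lemma integral_eq_zero_of_antiperiodic {E : Type*} [NormedAddCommGroup E] [NormedSpace ℝ E]
    {f : ℝ → E} {T : ℝ} (hf : Function.Antiperiodic f T) (hfc : Continuous f) :
    ∫ θ in (-T)..T, f θ = 0 := by
  have hshift : ∫ θ in (0 : ℝ)..T, f θ = -∫ θ in (-T)..0, f θ := by
    rw [← intervalIntegral.integral_neg, ← neg_add_cancel T]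
    calc ∫ θ in -T + T..T, f θ = ∫ θ in -T + T..0 + T, f θ := by rw [zero_add]
      _ = ∫ θ in (-T)..0, f (θ + T) := (intervalIntegral.integral_comp_add_right f T).symm
      _ = ∫ θ in (-T)..(-T + T), -f θ := by
          rw [neg_add_cancel]
          exact intervalIntegral.integral_congr fun θ _ => hf θ
  rw [← intervalIntegral.integral_add_adjacent_intervals (hfc.intervalIntegrable (-T) 0)
    (hfc.intervalIntegrable 0 T), hshift, add_neg_cancel]

/-- Since `max f 0 = (f + |f|) / 2`, only the antiperiodic part `|f| • g` has to cancel. -/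
lemma integral_max_zero_smul_of_antiperiodic {E : Type*} [NormedAddCommGroup E] [NormedSpace ℝ E]
    {f : ℝ → ℝ} {g : ℝ → E} {T : ℝ} (hf : Function.Antiperiodic f T)
    (hg : Function.Antiperiodic g T) (hfc : Continuous f) (hgc : Continuous g) :
    ∫ θ in (-T)..T, max (f θ) 0 • g θ = (1 / 2 : ℝ) • ∫ θ in (-T)..T, f θ • g θ := by
  have habs : ∫ θ in (-T)..T, |f θ| • g θ = 0 :=
    integral_eq_zero_of_antiperiodic (fun θ => by rw [hf, hg, abs_neg, smul_neg])
      (hfc.abs.smul hgc)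
  have hmax : ∀ θ, max (f θ) 0 • g θ = (1 / 2 : ℝ) • (f θ • g θ + |f θ| • g θ) := by
    intro θ
    rw [sup_eq_half_smul_add_add_abs_sub' ℝ, add_zero, zero_sub, abs_neg, smul_assoc, add_smul,
      one_div]
  simp only [hmax]
  rw [intervalIntegral.integral_smul, intervalIntegral.integral_add, habs, add_zero]
  · exact (hfc.smul hgc).intervalIntegrable _ _
  · exact (hfc.abs.smul hgc).intervalIntegrable _ _

lemma setIntegral_Ioi_prod_Ioo_ite_lt {E : Type*} [NormedAddCommGroup E] [NormedSpace ℝ E]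
    [CompleteSpace E] {a b : ℝ} (hab : a ≤ b) {ℓ : ℝ → ℝ} {u : ℝ → E} (hℓ : Continuous ℓ)
    (hu : Continuous u) :
    ∫ p in Set.Ioi 0 ×ˢ Set.Ioo a b, (if p.1 < ℓ p.2 then u p.2 else 0) =
      ∫ θ in a..b, max (ℓ θ) 0 • u θ := by
  set S : Set (ℝ × ℝ) := {p | p.1 < ℓ p.2}
  have hS : MeasurableSet S :=
    measurableSet_lt measurable_fst (hℓ.measurable.comp measurable_snd)
  obtain ⟨M, hM⟩ := isCompact_Icc.bddAbove_image (hℓ.continuousOn (s := Set.Icc a b))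
  have hbox : S ∩ Set.Ioi 0 ×ˢ Set.Ioo a b ⊆ Set.Icc 0 M ×ˢ Set.Icc a b := by
    rintro ⟨r, θ⟩ ⟨hr, hr0, hθ⟩
    have hθ' := Set.Ioo_subset_Icc_self hθ
    exact ⟨⟨le_of_lt hr0, (le_of_lt hr).trans (hM ⟨θ, hθ', rfl⟩)⟩, hθ'⟩
  have hint : IntegrableOn (S.indicator fun p => u p.2) (Set.Ioi 0 ×ˢ Set.Ioo a b) := by
    rw [IntegrableOn, integrable_indicator_iff hS, IntegrableOn, Measure.restrict_restrict hS]
    exact ((hu.comp continuous_snd).continuousOn.integrableOn_compact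
      (isCompact_Icc.prod isCompact_Icc)).mono_set hbox
  calc ∫ p in Set.Ioi 0 ×ˢ Set.Ioo a b, (if p.1 < ℓ p.2 then u p.2 else 0)
      = ∫ p in Set.Ioi 0 ×ˢ Set.Ioo a b, S.indicator (fun p => u p.2) p := rfl
    _ = ∫ θ in Set.Ioo a b, ∫ r in Set.Ioi 0, (Set.Iio (ℓ θ)).indicator (fun _ => u θ) r := by
        rw [IntegrableOn, Measure.volume_eq_prod, ← Measure.prod_restrict] at hint
        rw [Measure.volume_eq_prod, ← Measure.prod_restrict, integral_prod_symm _ hint]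
        rfl
    _ = ∫ θ in a..b, max (ℓ θ) 0 • u θ := by
        rw [intervalIntegral.integral_of_le hab, integral_Ioc_eq_integral_Ioo]
        congr 1 with θ
        rw [setIntegral_indicator measurableSet_Iio, Set.Ioi_inter_Iio, setIntegral_const,
          Real.volume_real_Ioo, sub_zero]

lemma cos_add_sin_mul_I_ne_zero (θ : ℝ) : (cos θ + sin θ * Complex.I : ℂ) ≠ 0 := by
  rw [Complex.ofReal_cos, Complex.ofReal_sin, ← Complex.exp_mul_I]
  exact Complex.exp_ne_zero _

/-- In polar coordinates centred at `z` the Jacobian cancels the singularity of the kernel. -/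
lemma setIntegral_inv_sub_eq_integral_polar {D : Set ℂ} (hD : MeasurableSet D) {z : ℂ}
    {ℓ : ℝ → ℝ} (hℓ : Continuous ℓ)
    (hmem : ∀ r : ℝ, 0 < r → ∀ θ : ℝ, z + r * (cos θ + sin θ * Complex.I) ∈ D ↔ r < ℓ θ) :
    ∫ w in D, (z - w)⁻¹ =
      ∫ θ in (-π)..π, max (ℓ θ) 0 • -(cos θ + sin θ * Complex.I : ℂ)⁻¹ := by
  have hu : Continuous fun θ : ℝ => -(cos θ + sin θ * Complex.I : ℂ)⁻¹ :=
    (Continuous.inv₀ (by fun_prop) cos_add_sin_mul_I_ne_zero).neg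
  rw [← integral_indicator hD, ← integral_add_left_eq_self _ z,
    ← Complex.integral_comp_polarCoord_symm, polarCoord_target,
    ← setIntegral_Ioi_prod_Ioo_ite_lt (by linarith [pi_pos]) hℓ hu]
  refine setIntegral_congr_fun (measurableSet_Ioi.prod measurableSet_Ioo) fun ⟨r, θ⟩ hrθ => ?_
  have hr : 0 < r := hrθ.1
  simp only [Complex.polarCoord_symm_apply]
  by_cases h : r < ℓ θ
  · rw [Set.indicator_of_mem ((hmem r hr θ).2 h), if_pos h, sub_add_cancel_left, Complex.real_smul,
      inv_neg, mul_inv, mul_neg, mul_inv_cancel_left₀ (Complex.ofReal_ne_zero.2 hr.ne')]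
  · rw [Set.indicator_of_notMem (mt (hmem r hr θ).1 h), if_neg h, smul_zero]

variable {t : ℝ}

lemma ellipse_denom_pos (ht : t ≠ 0) (θ : ℝ) : 0 < t ^ 2 * cos θ ^ 2 + sin θ ^ 2 := by
  rcases eq_or_ne (cos θ) 0 with h | h
  · nlinarith [sin_sq_add_cos_sq θ]
  · positivity

lemma continuous_div_ellipse_denom (ht : t ≠ 0) {g : ℝ → ℝ} (hg : Continuous g) :
    Continuous fun θ => g θ / (t ^ 2 * cos θ ^ 2 + sin θ ^ 2) :=
  hg.div (by fun_prop) fun θ => (ellipse_denom_pos ht θ).ne'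

/-- The primitive is `t⁻¹` times the continuous branch `θ + (φ - θ)` of the angle `φ` with
`tan φ = tan θ / t`, where `φ - θ` is given by the subtraction formula for the tangent. -/
lemma hasDerivAt_ellipse_angle (ht : 0 < t) (θ : ℝ) :
    HasDerivAt
      (fun θ => t⁻¹ * (θ + arctan ((1 - t) * (sin θ * cos θ) / (t * cos θ ^ 2 + sin θ ^ 2))))
      (t ^ 2 * cos θ ^ 2 + sin θ ^ 2)⁻¹ θ := by
  set N : ℝ → ℝ := fun θ => (1 - t) * (sin θ * cos θ)
  set D : ℝ → ℝ := fun θ => t * cos θ ^ 2 + sin θ ^ 2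
  have hD : D θ ≠ 0 := by
    have := ellipse_denom_pos (sqrt_ne_zero'.2 ht) θ
    rw [sq_sqrt ht.le] at this
    exact this.ne'
  have hsin := hasDerivAt_sin θ
  have hcos := hasDerivAt_cos θ
  have hN : HasDerivAt N _ θ := (hsin.mul hcos).const_mul (1 - t)
  have hDd : HasDerivAt D _ θ := ((hcos.pow 2).const_mul t).add (hsin.pow 2)
  refine (((hasDerivAt_id θ).add (hN.div hDd hD).arctan).const_mul t⁻¹).congr_deriv ?_
  have hQ := ellipse_denom_pos ht.ne' θ
  have hsc := sin_sq_add_cos_sq θ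
  have hnorm : D θ ^ 2 + N θ ^ 2 = t ^ 2 * cos θ ^ 2 + sin θ ^ 2 := by
    simp only [N, D]
    linear_combination (t ^ 2 * cos θ ^ 2 + sin θ ^ 2) * hsc
  have hfrac : 1 + (N θ / D θ) ^ 2 = (t ^ 2 * cos θ ^ 2 + sin θ ^ 2) / D θ ^ 2 := by
    rw [← hnorm]
    field_simp
  rw [Pi.div_apply, hfrac]
  field_simp
  simp only [N, D]
  push_cast
  linear_combination
    (t * (sin θ ^ 2 + cos θ ^ 2 + 1) - t ^ 2 * cos θ ^ 2 - sin θ ^ 2) * hsc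

lemma integral_inv_ellipse_denom (ht : 0 < t) :
    ∫ θ in (-π)..π, (t ^ 2 * cos θ ^ 2 + sin θ ^ 2)⁻¹ = 2 * π / t := by
  have hcont : Continuous fun θ => (t ^ 2 * cos θ ^ 2 + sin θ ^ 2)⁻¹ :=
    Continuous.inv₀ (by fun_prop) fun θ => (ellipse_denom_pos ht.ne' θ).ne'
  rw [intervalIntegral.integral_eq_sub_of_hasDerivAt (fun θ _ => hasDerivAt_ellipse_angle ht θ)
    (hcont.intervalIntegrable _ _)]
  simp only [sin_pi, sin_neg, neg_zero, zero_mul, mul_zero, zero_div, arctan_zero]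
  ring

lemma integral_sin_sq_div_ellipse_denom (ht : 0 < t) :
    ∫ θ in (-π)..π, sin θ ^ 2 / (t ^ 2 * cos θ ^ 2 + sin θ ^ 2) = 2 * π / (1 + t) := by
  rcases eq_or_ne t 1 with rfl | ht1
  · simp only [one_pow, one_mul, cos_sq_add_sin_sq, div_one, integral_sin_sq]
    simp only [sin_neg, sin_pi, neg_zero, cos_neg, cos_pi, mul_neg, mul_one, sub_self, zero_add,
      sub_neg_eq_add, add_self_div_two]
    ring
  · have h1 : 1 - t ≠ 0 := sub_ne_zero.2 ht1.symm
    have hpt : ∀ θ : ℝ, sin θ ^ 2 / (t ^ 2 * cos θ ^ 2 + sin θ ^ 2) =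
        (1 - t ^ 2)⁻¹ * (1 - t ^ 2 * (t ^ 2 * cos θ ^ 2 + sin θ ^ 2)⁻¹) := by
      intro θ
      have hQ := (ellipse_denom_pos ht.ne' θ).ne'
      have h2 : 1 - t ^ 2 ≠ 0 := by
        rw [← one_pow 2, sq_sub_sq]
        exact mul_ne_zero (by positivity) h1
      field_simp
      linear_combination -t ^ 2 * sin_sq_add_cos_sq θ
    have hinv := (continuous_div_ellipse_denom ht.ne' (g := fun _ => 1) (by fun_prop)
      ).intervalIntegrable (μ := volume) (-π) π
    simp only [hpt, one_div] at hinv ⊢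
    rw [intervalIntegral.integral_const_mul, intervalIntegral.integral_sub
      intervalIntegrable_const (hinv.const_mul _), intervalIntegral.integral_const_mul,
      integral_inv_ellipse_denom ht, intervalIntegral.integral_const, smul_eq_mul]
    have h2 : 1 - t ^ 2 = (1 - t) * (1 + t) := by ring
    rw [h2]
    field_simp
    ring

lemma integral_cos_sq_div_ellipse_denom (ht : 0 < t) :
    ∫ θ in (-π)..π, cos θ ^ 2 / (t ^ 2 * cos θ ^ 2 + sin θ ^ 2) = 2 * π / (t * (1 + t)) := by
  have hpt : ∀ θ : ℝ, cos θ ^ 2 / (t ^ 2 * cos θ ^ 2 + sin θ ^ 2) =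
      (t ^ 2)⁻¹ * (1 - sin θ ^ 2 / (t ^ 2 * cos θ ^ 2 + sin θ ^ 2)) := by
    intro θ
    have hQ := (ellipse_denom_pos ht.ne' θ).ne'
    rw [one_sub_div hQ]
    field_simp
    ring
  have hsin := (continuous_div_ellipse_denom ht.ne' (g := fun θ => sin θ ^ 2) (by fun_prop)
    ).intervalIntegrable (μ := volume) (-π) π
  simp only [hpt]
  rw [intervalIntegral.integral_const_mul, intervalIntegral.integral_sub
    intervalIntegrable_const hsin, integral_sin_sq_div_ellipse_denom ht,
    intervalIntegral.integral_const, smul_eq_mul]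
  field_simp
  ring

lemma integral_cos_mul_sin_div_ellipse_denom (t : ℝ) :
    ∫ θ in (-π)..π, cos θ * sin θ / (t ^ 2 * cos θ ^ 2 + sin θ ^ 2) = 0 := by
  have h := intervalIntegral.integral_comp_neg (a := -π) (b := π)
    fun θ => cos θ * sin θ / (t ^ 2 * cos θ ^ 2 + sin θ ^ 2)
  simp only [cos_neg, sin_neg, neg_neg, mul_neg, neg_sq, neg_div,
    intervalIntegral.integral_neg] at h
  linarith

/-- The elliptic disk with semi-axes `1` and `t`, as a subset of the complex plane. -/
def ellipticDisk (t : ℝ) : Set ℂ := {w | w.re ^ 2 + (w.im / t) ^ 2 < 1}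

lemma measurableSet_ellipticDisk (t : ℝ) : MeasurableSet (ellipticDisk t) :=
  measurableSet_lt (by fun_prop) measurable_const

lemma isBounded_ellipticDisk (ht : t ≠ 0) : Bornology.IsBounded (ellipticDisk t) := by
  refine isBounded_iff_forall_norm_le.2 ⟨1 + |t|, fun w hw => ?_⟩
  rw [ellipticDisk, Set.mem_ofPred_eq] at hw
  have hre : |w.re| ≤ 1 := abs_le_one_iff_mul_self_le_one.2 (by nlinarith [sq_nonneg (w.im / t)])
  have him : |w.im / t| ≤ 1 := abs_le_one_iff_mul_self_le_one.2 (by nlinarith [sq_nonneg w.re])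
  rw [abs_div, div_le_one (abs_pos.2 ht)] at him
  linarith [Complex.norm_le_abs_re_add_abs_im w]

/-- Signed length of the chord of the ellipse with semi-axes `1` and `t` that starts at the
boundary point `z` in the direction `θ`. -/
def ellipticChord (t : ℝ) (z : ℂ) (θ : ℝ) : ℝ :=
  -2 * (t ^ 2 * z.re * cos θ + z.im * sin θ) / (t ^ 2 * cos θ ^ 2 + sin θ ^ 2)

lemma add_polar_mem_ellipticDisk_iff (ht : t ≠ 0) {z : ℂ} (hz : z.re ^ 2 + (z.im / t) ^ 2 = 1)
    {r : ℝ} (hr : 0 < r) (θ : ℝ) :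
    z + r * (cos θ + sin θ * Complex.I) ∈ ellipticDisk t ↔ r < ellipticChord t z θ := by
  have hre : (z + r * (cos θ + sin θ * Complex.I)).re = z.re + r * cos θ := by
    simp [-Complex.ofReal_cos, -Complex.ofReal_sin]
  have him : (z + r * (cos θ + sin θ * Complex.I)).im = z.im + r * sin θ := by
    simp [-Complex.ofReal_cos, -Complex.ofReal_sin]
  have hquad : (z.re + r * cos θ) ^ 2 + ((z.im + r * sin θ) / t) ^ 2 - 1 =
      r / t ^ 2 * (r * (t ^ 2 * cos θ ^ 2 + sin θ ^ 2) -
        -2 * (t ^ 2 * z.re * cos θ + z.im * sin θ)) := by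
    field_simp at hz ⊢
    linear_combination hz
  rw [ellipticDisk, Set.mem_ofPred_eq, hre, him, ellipticChord,
    lt_div_iff₀ (ellipse_denom_pos ht θ), ← sub_neg, hquad, ← sub_neg (b := -2 * _)]
  exact ⟨fun h => neg_of_mul_neg_right h (by positivity),
    fun h => mul_neg_of_pos_of_neg (by positivity) h⟩

lemma continuous_ellipticChord (ht : t ≠ 0) (z : ℂ) : Continuous (ellipticChord t z) :=
  continuous_div_ellipse_denom ht (by fun_prop)

lemma integral_ellipticChord_smul (ht : 0 < t) (z : ℂ) :
    ∫ θ in (-π)..π, ellipticChord t z θ • -(cos θ - sin θ * Complex.I : ℂ) =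
      2 * (2 * π / (1 + t) * (t * z.re - z.im * Complex.I)) := by
  have hexpand : ∀ θ : ℝ, ellipticChord t z θ • -(cos θ - sin θ * Complex.I : ℂ) =
      2 * t ^ 2 * z.re * (cos θ ^ 2 / (t ^ 2 * cos θ ^ 2 + sin θ ^ 2) : ℝ) +
      -2 * z.im * Complex.I * (sin θ ^ 2 / (t ^ 2 * cos θ ^ 2 + sin θ ^ 2) : ℝ) +
      2 * (z.im - t ^ 2 * z.re * Complex.I) *
        (cos θ * sin θ / (t ^ 2 * cos θ ^ 2 + sin θ ^ 2) : ℝ) := by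
    intro θ
    rw [ellipticChord, Complex.real_smul]
    push_cast
    ring
  have hcos := continuous_div_ellipse_denom ht.ne' (g := fun θ => cos θ ^ 2) (by fun_prop)
  have hsin := continuous_div_ellipse_denom ht.ne' (g := fun θ => sin θ ^ 2) (by fun_prop)
  have hmix := continuous_div_ellipse_denom ht.ne' (g := fun θ => cos θ * sin θ) (by fun_prop)
  simp only [hexpand]
  rw [intervalIntegral.integral_add, intervalIntegral.integral_add]
  · simp only [intervalIntegral.integral_const_mul, intervalIntegral.integral_ofReal,
      integral_cos_sq_div_ellipse_denom ht, integral_sin_sq_div_ellipse_denom ht,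
      integral_cos_mul_sin_div_ellipse_denom]
    have ht1 : (1 + t : ℂ) ≠ 0 := by exact_mod_cast (by positivity : 1 + t ≠ 0)
    push_cast
    field_simp
    ring
  all_goals exact Continuous.intervalIntegrable (by fun_prop) _ _

lemma setIntegral_inv_sub_ellipticDisk (ht : 0 < t) {z : ℂ}
    (hz : z.re ^ 2 + (z.im / t) ^ 2 = 1) :
    ∫ w in ellipticDisk t, (z - w)⁻¹ = 2 * π / (1 + t) * (t * z.re - z.im * Complex.I) := by
  have hchord := continuous_ellipticChord ht.ne' z
  have hdir : ∀ θ : ℝ, -(cos θ + sin θ * Complex.I : ℂ)⁻¹ = -(cos θ - sin θ * Complex.I) := by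
    intro θ
    have hunit : (cos θ : ℂ) ^ 2 + (sin θ : ℂ) ^ 2 = 1 := by exact_mod_cast cos_sq_add_sin_sq θ
    rw [inv_eq_of_mul_eq_one_right (b := (cos θ - sin θ * Complex.I : ℂ))]
    linear_combination hunit - (sin θ : ℂ) ^ 2 * Complex.I_sq
  have hchord_anti : Function.Antiperiodic (ellipticChord t z) π := fun θ => by
    simp only [ellipticChord, cos_add_pi, sin_add_pi]
    ring
  have hdir_anti :
      Function.Antiperiodic (fun θ : ℝ => -(cos θ - sin θ * Complex.I : ℂ)) π := fun θ => by
    simp only [cos_add_pi, sin_add_pi, Complex.ofReal_neg]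
    ring
  rw [setIntegral_inv_sub_eq_integral_polar (measurableSet_ellipticDisk t) hchord
    fun r hr θ => add_polar_mem_ellipticDisk_iff ht.ne' hz hr θ]
  simp only [hdir]
  rw [integral_max_zero_smul_of_antiperiodic hchord_anti hdir_anti hchord (by fun_prop),
    integral_ellipticChord_smul ht, Complex.real_smul]
  push_cast
  ring

end CauchyTransform

/-! ### The gradient of the stream function on the boundary -/

section StreamFunction

lemma pt_apply_zero (a b : ℝ) : pt a b 0 = a := rfl

lemma pt_apply_one (a b : ℝ) : pt a b 1 = b := rfl

/-- The standard isometry between the complex plane and the Euclidean plane. -/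
def complexEquivPt : ℂ ≃ₗᵢ[ℝ] Pt := Complex.orthonormalBasisOneI.repr

lemma complexEquivPt_apply (z : ℂ) : complexEquivPt z = pt z.re z.im := by
  ext i
  fin_cases i <;> simp [complexEquivPt, pt]

lemma complexEquivPt_symm_apply (x : Pt) : complexEquivPt.symm x = ⟨x 0, x 1⟩ := by
  rw [LinearIsometryEquiv.symm_apply_eq, complexEquivPt_apply]
  ext i
  fin_cases i <;> rfl

lemma norm_pt (a b : ℝ) : ‖pt a b‖ = √(a ^ 2 + b ^ 2) := by
  rw [EuclideanSpace.norm_eq, Fin.sum_univ_two, pt_apply_zero, pt_apply_one, norm_eq_abs,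
    norm_eq_abs, sq_abs, sq_abs]

lemma real_tanh_pos {ξ : ℝ} (hξ : 0 < ξ) : 0 < tanh ξ := by
  rw [tanh_eq_sinh_div_cosh]
  exact div_pos (sinh_pos_iff.2 hξ) (cosh_pos ξ)

lemma Ψell_eq_log_potential (ξ : ℝ) (x : Pt) :
    Ψell ξ x = 1 / (2 * π) * (∫ w in ellipticDisk (tanh ξ), log ‖complexEquivPt.symm x - w‖) -
      Ωell ξ / 2 * ‖x‖ ^ 2 := by
  have hpreimage : complexEquivPt ⁻¹' Eell ξ = ellipticDisk (tanh ξ) := by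
    ext w
    simp only [Set.mem_preimage, complexEquivPt_apply]
    rfl
  have hdist : ∀ w, ‖x - complexEquivPt w‖ = ‖complexEquivPt.symm x - w‖ := fun w => by
    rw [← complexEquivPt.norm_map (_ - w), map_sub, complexEquivPt.apply_symm_apply]
  rw [Ψell, ← complexEquivPt.measurePreserving.setIntegral_preimage_emb
    complexEquivPt.toHomeomorph.measurableEmbedding, hpreimage, mul_div_right_comm]
  simp only [hdist]

lemma hasGradientAt_Ψell {ξ : ℝ} (hξ : 0 < ξ) {x : Pt} (hx : x 0 ^ 2 + (x 1 / tanh ξ) ^ 2 = 1) :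
    HasGradientAt (Ψell ξ)
      (pt (tanh ξ ^ 2 / (1 + tanh ξ) ^ 2 * x 0) (1 / (1 + tanh ξ) ^ 2 * x 1)) x := by
  have ht := real_tanh_pos hξ
  have hpot := hasFDerivAt_log_potential (measurableSet_ellipticDisk (tanh ξ))
    (isBounded_ellipticDisk ht.ne') (complexEquivPt.symm x)
  have hcoeff : (2 * π / (1 + (tanh ξ : ℝ)) : ℂ) = (2 * π / (1 + tanh ξ) : ℝ) := by push_cast; rfl
  rw [setIntegral_inv_sub_ellipticDisk ht (by rwa [complexEquivPt_symm_apply]),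
    hcoeff] at hpot
  have hpotPt := hpot.comp x complexEquivPt.symm.toContinuousLinearEquiv.hasFDerivAt
  have hsq : HasFDerivAt (fun x : Pt => ‖x‖ ^ 2) _ x := (hasStrictFDerivAt_norm_sq x).hasFDerivAt
  rw [HasGradientAt, funext (Ψell_eq_log_potential ξ)]
  refine ((hpotPt.const_mul (1 / (2 * π))).sub (hsq.const_mul (Ωell ξ / 2))).congr_fderiv ?_
  ext v
  have h1t : 1 + tanh ξ ≠ 0 := by positivity
  simp only [complexEquivPt_symm_apply, LinearIsometryEquiv.toContinuousLinearEquiv_symm, Ωell,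
    sub_apply, smul_apply, ContinuousLinearMap.comp_apply, ContinuousLinearEquiv.coe_coe,
    LinearIsometryEquiv.coe_symm_toContinuousLinearEquiv, ContinuousLinearMap.mul_apply', mul_assoc,
    Complex.reCLM_apply, Complex.mul_re, Complex.ofReal_re, Complex.sub_re, Complex.ofReal_im,
    mul_zero, sub_zero, Complex.I_re, Complex.I_im, mul_one, sub_self, Complex.sub_im,
    Complex.mul_im, zero_mul, add_zero, zero_sub, neg_mul, sub_neg_eq_add, smul_eq_mul,
    coe_innerSL_apply, PiLp.inner_apply, RCLike.inner_apply, ringHom_apply, Fin.sum_univ_two,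
    smul_add, nsmul_eq_mul, Nat.cast_ofNat, InnerProductSpace.toDual_apply_apply, pt_apply_zero,
    pt_apply_one]
  field_simp
  ring

end StreamFunction

/-! ### Arclength is one-dimensional Hausdorff measure -/

section HausdorffMeasureImage

variable {X : Type*} [MetricSpace X] [MeasurableSpace X] [BorelSpace X] {f : ℝ → X} {K : ℝ}
  {s : Set ℝ}

lemma hausdorffMeasure_one_image_le (hK : 0 ≤ K)
    (hf : ∀ u ∈ s, ∀ v ∈ s, dist (f u) (f v) ≤ K * dist u v) :
    μH[1] (f '' s) ≤ ENNReal.ofReal K * volume s := by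
  have hlip : LipschitzOnWith K.toNNReal f s :=
    LipschitzOnWith.of_dist_le_mul fun u hu v hv => by
      rw [Real.coe_toNNReal K hK]
      exact hf u hu v hv
  have hle := hlip.hausdorffMeasure_image_le zero_le_one
  rwa [ENNReal.rpow_one, hausdorffMeasure_real] at hle

lemma le_hausdorffMeasure_one_image (hf : ∀ u ∈ s, ∀ v ∈ s, K * dist u v ≤ dist (f u) (f v)) :
    ENNReal.ofReal K * volume s ≤ μH[1] (f '' s) := by
  rcases le_or_gt K 0 with hK | hK
  · rw [ENNReal.ofReal_of_nonpos hK, zero_mul]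
    exact zero_le
  have hanti : AntilipschitzWith K⁻¹.toNNReal (s.domRestrict f) :=
    AntilipschitzWith.of_le_mul_dist fun u v => by
      rw [Real.coe_toNNReal _ (inv_nonneg.2 hK.le), inv_mul_eq_div, le_div_iff₀' hK]
      exact hf u u.2 v v.2
  have hle := hanti.le_hausdorffMeasure_image zero_le_one Set.univ
  rw [ENNReal.rpow_one, ← isometry_subtype_coe.hausdorffMeasure_image (Or.inl zero_le_one),
    hausdorffMeasure_real, Set.image_univ, Set.image_univ, Subtype.range_coe,
    Set.range_domRestrict] at hle
  calc ENNReal.ofReal K * volume s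
      ≤ ENNReal.ofReal K * (ENNReal.ofReal K⁻¹ * μH[1] (f '' s)) := by gcongr; exact hle
    _ = μH[1] (f '' s) := by
        rw [← mul_assoc, ← ENNReal.ofReal_mul hK.le, mul_inv_cancel₀ hK.ne', ENNReal.ofReal_one,
          one_mul]

lemma hausdorffMeasure_real_image_Ico_le {a b : ℝ} (hK : 0 ≤ K) (hab : a ≤ b)
    (hf : ∀ u ∈ Set.Ico a b, ∀ v ∈ Set.Ico a b, dist (f u) (f v) ≤ K * dist u v) :
    (μH[1] : Measure X).real (f '' Set.Ico a b) ≤ K * (b - a) := by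
  have hle := hausdorffMeasure_one_image_le hK hf
  rw [Real.volume_Ico, ← ENNReal.ofReal_mul hK] at hle
  exact ENNReal.toReal_le_of_le_ofReal (mul_nonneg hK (sub_nonneg.2 hab)) hle

lemma le_hausdorffMeasure_real_image_Ico {a b : ℝ} (hab : a ≤ b)
    (hfin : μH[1] (f '' Set.Ico a b) ≠ ⊤)
    (hf : ∀ u ∈ Set.Ico a b, ∀ v ∈ Set.Ico a b, K * dist u v ≤ dist (f u) (f v)) :
    K * (b - a) ≤ (μH[1] : Measure X).real (f '' Set.Ico a b) := by
  have hle := le_hausdorffMeasure_one_image hf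
  rw [Real.volume_Ico, ← ENNReal.ofReal_mul' (sub_nonneg.2 hab), ← ofReal_measureReal hfin] at hle
  exact (ENNReal.ofReal_le_ofReal_iff measureReal_nonneg).1 hle

lemma hausdorffMeasure_real_image_Ico_add {a b c : ℝ} (hf : Continuous f)
    (hinj : Set.InjOn f (Set.Ico a c)) (hab : a ≤ b) (hbc : b ≤ c)
    (hfin : μH[1] (f '' Set.Ico a c) ≠ ⊤) :
    (μH[1] : Measure X).real (f '' Set.Ico a c) =
      (μH[1] : Measure X).real (f '' Set.Ico a b) +
        (μH[1] : Measure X).real (f '' Set.Ico b c) := by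
  have hdisj : Disjoint (f '' Set.Ico a b) (f '' Set.Ico b c) :=
    Set.disjoint_image_image fun u hu v hv huv => (hu.2.trans_le hv.1).ne
      (hinj (Set.Ico_subset_Ico_right hbc hu) (Set.Ico_subset_Ico_left hab hv) huv)
  have hmeas : MeasurableSet (f '' Set.Ico b c) :=
    measurableSet_Ico.image_of_continuousOn_injOn hf.continuousOn
      (hinj.mono (Set.Ico_subset_Ico_left hab))
  rw [← Set.Ico_union_Ico_eq_Ico hab hbc, Set.image_union] at hfin ⊢
  exact measureReal_union hdisj hmeas (measure_ne_top_of_subset Set.subset_union_left hfin)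
    (measure_ne_top_of_subset Set.subset_union_right hfin)

end HausdorffMeasureImage

section ArcLength

variable {E : Type*} [NormedAddCommGroup E] [NormedSpace ℝ E]

lemma exists_ball_dist_bounds_of_hasStrictDerivAt {γ : ℝ → E} {v : E} {x ε : ℝ}
    (hγ : HasStrictDerivAt γ v x) (hε : 0 < ε) :
    ∃ δ > 0, ∀ y ∈ Metric.ball x δ, ∀ z ∈ Metric.ball x δ,
      (‖v‖ - ε) * dist y z ≤ dist (γ y) (γ z) ∧ dist (γ y) (γ z) ≤ (‖v‖ + ε) * dist y z := by
  have happrox := (hasStrictFDerivAt_iff_isLittleO.1 hγ.hasStrictFDerivAt).def hε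
  rw [nhds_prod_eq, Filter.eventually_prod_self_iff'] at happrox
  obtain ⟨U, hU, hbound⟩ := happrox
  obtain ⟨δ, hδ, hball⟩ := Metric.mem_nhds_iff.1 hU
  refine ⟨δ, hδ, fun y hy z hz => ?_⟩
  have herror : ‖γ y - γ z - (y - z) • v‖ ≤ ε * |y - z| := by
    simpa using hbound y (hball hy) z (hball hz)
  have hlinear : ‖(y - z) • v‖ = ‖v‖ * |y - z| := by rw [norm_smul, norm_eq_abs, mul_comm]
  have hupper := norm_sub_norm_le (γ y - γ z) ((y - z) • v)
  have hlower := norm_sub_norm_le ((y - z) • v) (γ y - γ z)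
  rw [norm_sub_rev _ (γ y - γ z)] at hlower
  rw [Real.dist_eq, dist_eq_norm]
  constructor <;> linarith

lemma exists_lipschitzOnWith_Icc_of_hasDerivAt {γ γ' : ℝ → E} (hγ : ∀ x, HasDerivAt γ (γ' x) x)
    (hγ' : Continuous γ') (a b : ℝ) : ∃ C, LipschitzOnWith C γ (Set.Icc a b) := by
  obtain ⟨C, hC⟩ := isCompact_Icc.exists_bound_of_continuousOn hγ'.continuousOn
  exact ⟨C.toNNReal, (convex_Icc a b).lipschitzOnWith_of_nnnorm_hasDerivWithin_le
    (fun x _ => (hγ x).hasDerivWithinAt) fun x hx => NNReal.le_toNNReal_of_coe_le (hC x hx)⟩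

variable [MeasurableSpace E] [BorelSpace E] {γ γ' : ℝ → E} {a b : ℝ}

lemma hausdorffMeasure_image_Ico_ne_top (hγ : ∀ x, HasDerivAt γ (γ' x) x) (hγ' : Continuous γ')
    (a b : ℝ) : μH[1] (γ '' Set.Ico a b) ≠ ⊤ := by
  obtain ⟨C, hC⟩ := exists_lipschitzOnWith_Icc_of_hasDerivAt hγ hγ' a b
  have hle := hausdorffMeasure_one_image_le C.coe_nonneg fun u hu v hv =>
    (hC.mono Set.Ico_subset_Icc_self).dist_le_mul u hu v hv
  refine ne_top_of_le_ne_top ?_ hle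
  rw [Real.volume_Ico]
  exact ENNReal.mul_ne_top ENNReal.ofReal_ne_top ENNReal.ofReal_ne_top

lemma hasDerivWithinAt_hausdorffMeasure_real_image_Ico (hγ : ∀ x, HasDerivAt γ (γ' x) x)
    (hγ' : Continuous γ') (x : ℝ) :
    HasDerivWithinAt (fun y => (μH[1] : Measure E).real (γ '' Set.Ico x y)) ‖γ' x‖
      (Set.Ici x) x := by
  rw [hasDerivWithinAt_iff_isLittleO, Asymptotics.isLittleO_iff]
  intro ε hε
  have hstrict : HasStrictDerivAt γ (γ' x) x :=
    hasStrictDerivAt_of_hasDerivAt_of_continuousAt (.of_forall hγ) hγ'.continuousAt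
  obtain ⟨δ, hδ, hbound⟩ := exists_ball_dist_bounds_of_hasStrictDerivAt hstrict hε
  filter_upwards [mem_nhdsWithin_of_mem_nhds (Iio_mem_nhds (lt_add_of_pos_right x hδ)),
    self_mem_nhdsWithin] with y (hyδ : y < x + δ) (hxy : x ≤ y)
  have hball : ∀ u ∈ Set.Ico x y, u ∈ Metric.ball x δ := fun u hu => by
    rw [Metric.mem_ball, Real.dist_eq, abs_of_nonneg (sub_nonneg.2 hu.1)]
    linarith [hu.2]
  have hupper := hausdorffMeasure_real_image_Ico_le (by positivity) hxy fun u hu v hv =>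
    (hbound u (hball u hu) v (hball v hv)).2
  have hlower := le_hausdorffMeasure_real_image_Ico hxy
    (hausdorffMeasure_image_Ico_ne_top hγ hγ' x y) fun u hu v hv =>
    (hbound u (hball u hu) v (hball v hv)).1
  rw [Set.Ico_self, Set.image_empty, measureReal_empty, sub_zero, smul_eq_mul, norm_eq_abs,
    norm_eq_abs, abs_of_nonneg (sub_nonneg.2 hxy), abs_le]
  constructor <;> linarith

lemma hausdorffMeasure_real_image_Ico (hγ : ∀ x, HasDerivAt γ (γ' x) x) (hγ' : Continuous γ')
    (hinj : Set.InjOn γ (Set.Ico a b)) (hab : a ≤ b) :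
    (μH[1] : Measure E).real (γ '' Set.Ico a b) = ∫ x in a..b, ‖γ' x‖ := by
  have hγc : Continuous γ := continuous_iff_continuousAt.2 fun x => (hγ x).continuousAt
  set F : ℝ → ℝ := fun y => (μH[1] : Measure E).real (γ '' Set.Ico a y) with hF
  have hadd : ∀ x y, a ≤ x → x ≤ y → y ≤ b →
      F y = F x + (μH[1] : Measure E).real (γ '' Set.Ico x y) := fun x y hx hxy hy =>
    hausdorffMeasure_real_image_Ico_add hγc (hinj.mono (Set.Ico_subset_Ico_right hy)) hx hxy
      (hausdorffMeasure_image_Ico_ne_top hγ hγ' a y)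
  have hcont : ContinuousOn F (Set.Icc a b) := by
    obtain ⟨C, hC⟩ := exists_lipschitzOnWith_Icc_of_hasDerivAt hγ hγ' a b
    refine (LipschitzOnWith.of_le_add_mul C fun x hx y hy => ?_).continuousOn
    rcases le_total x y with hxy | hyx
    · rw [hadd x y hx.1 hxy hy.2, add_assoc]
      exact le_add_of_nonneg_right (by positivity)
    · rw [hadd y x hy.1 hyx hx.2, Real.dist_eq, abs_of_nonneg (sub_nonneg.2 hyx)]
      gcongr
      exact hausdorffMeasure_real_image_Ico_le C.coe_nonneg hyx fun u hu v hv =>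
        hC.dist_le_mul u ⟨hy.1.trans hu.1, hu.2.le.trans hx.2⟩ v
          ⟨hy.1.trans hv.1, hv.2.le.trans hx.2⟩
  have hderiv : ∀ x ∈ Set.Ioo a b, HasDerivWithinAt F ‖γ' x‖ (Set.Ioi x) x := fun x hx => by
    have hlocal := (hasDerivWithinAt_hausdorffMeasure_real_image_Ico hγ hγ' x).const_add (F x)
    refine (hlocal.congr_of_eventuallyEq ?_ (by simp)).mono Set.Ioi_subset_Ici_self
    filter_upwards [mem_nhdsWithin_of_mem_nhds (Iio_mem_nhds hx.2), self_mem_nhdsWithin]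
      with y hyb hxy
    exact hadd x y hx.1.le hxy (le_of_lt hyb)
  rw [intervalIntegral.integral_eq_sub_of_hasDeriv_right_of_le hab hcont hderiv
    (hγ'.norm.intervalIntegrable a b)]
  simp [hF]

lemma withDensity_norm_deriv_eq_map_comap_hausdorffMeasure (hγ : ∀ x, HasDerivAt γ (γ' x) x)
    (hγ' : Continuous γ') (hinj : Set.InjOn γ (Set.Ico a b)) :
    (volume.restrict (Set.Ico a b)).withDensity (fun x => ENNReal.ofReal ‖γ' x‖) =
      (Measure.comap ((Set.Ico a b).domRestrict γ) μH[1]).map Subtype.val := by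
  have hγc : Continuous γ := continuous_iff_continuousAt.2 fun x => (hγ x).continuousAt
  have hval := MeasurableEmbedding.subtype_coe (measurableSet_Ico (a := a) (b := b))
  have hemb := hγc.continuousOn.measurableEmbedding measurableSet_Ico hinj
  have hint : ∀ c d, IntegrableOn (fun x => ‖γ' x‖) (Set.Ico c d) := fun c d =>
    hγ'.norm.integrableOn_Icc.mono_set Set.Ico_subset_Icc_self
  have := isFiniteMeasure_withDensity_ofReal (hint a b).2
  refine Measure.ext_of_Ico _ _ fun c d _ => ?_
  rw [Measure.map_apply hval.measurable measurableSet_Ico, hemb.comap_apply, Set.domRestrict_eq,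
    Set.image_comp, Subtype.image_preimage_coe, withDensity_apply _ measurableSet_Ico,
    Measure.restrict_restrict measurableSet_Ico, Set.inter_comm, Set.Ico_inter_Ico]
  rcases le_total (min b d) (max a c) with hle | hle
  · rw [Set.Ico_eq_empty hle.not_gt, Set.image_empty, Measure.restrict_empty,
      lintegral_zero_measure, measure_empty]
  · rw [← ofReal_integral_eq_lintegral_ofReal (hint _ _) (.of_forall fun x => norm_nonneg _),
      integral_Ico_eq_integral_Ioc, ← intervalIntegral.integral_of_le hle,
      ← hausdorffMeasure_real_image_Ico hγ hγ'
        (hinj.mono (Set.Ico_subset_Ico (le_max_left _ _) (min_le_left _ _))) hle,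
      ofReal_measureReal (hausdorffMeasure_image_Ico_ne_top hγ hγ' _ _)]

lemma setIntegral_hausdorffMeasure_image_Ico {F : Type*} [NormedAddCommGroup F] [NormedSpace ℝ F]
    (hγ : ∀ x, HasDerivAt γ (γ' x) x)
    (hγ' : Continuous γ') (hinj : Set.InjOn γ (Set.Ico a b)) (hab : a ≤ b) (f : E → F) :
    ∫ y in γ '' Set.Ico a b, f y ∂μH[1] = ∫ x in a..b, ‖γ' x‖ • f (γ x) := by
  have hγc : Continuous γ := continuous_iff_continuousAt.2 fun x => (hγ x).continuousAt
  have hval := MeasurableEmbedding.subtype_coe (measurableSet_Ico (a := a) (b := b))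
  have hemb := hγc.continuousOn.measurableEmbedding measurableSet_Ico hinj
  calc ∫ y in γ '' Set.Ico a b, f y ∂μH[1]
      = ∫ x, f (γ x) ∂((Measure.comap ((Set.Ico a b).domRestrict γ) μH[1]).map Subtype.val) := by
        rw [← Set.range_domRestrict, ← hemb.map_comap, hemb.integral_map, hval.integral_map]
        rfl
    _ = ∫ x in Set.Ico a b, ‖γ' x‖ • f (γ x) := by
        rw [← withDensity_norm_deriv_eq_map_comap_hausdorffMeasure hγ hγ' hinj,
          integral_withDensity_eq_integral_toReal_smul (by fun_prop) (by simp)]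
        simp only [ENNReal.toReal_ofReal (norm_nonneg _)]
    _ = ∫ x in a..b, ‖γ' x‖ • f (γ x) := by
        rw [integral_Ico_eq_integral_Ioc, intervalIntegral.integral_of_le hab]

end ArcLength

/-! ### The boundary of the ellipse -/

section EllipseBoundary

/-- The parametrization `η ↦ (cos η, t sin η)` of the ellipse with semi-axes `1` and `t`. -/
def ellipseParam (t η : ℝ) : Pt := pt (cos η) (t * sin η)

lemma pt_eq_smul_add_smul (a b : ℝ) : pt a b = a • pt 1 0 + b • pt 0 1 := by
  ext i
  fin_cases i <;> simp [pt]

lemma hasDerivAt_ellipseParam (t η : ℝ) :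
    HasDerivAt (ellipseParam t) (pt (-sin η) (t * cos η)) η := by
  have hderiv := ((hasDerivAt_cos η).smul_const (pt 1 0)).fun_add
    (((hasDerivAt_sin η).const_mul t).smul_const (pt 0 1))
  simp only [← pt_eq_smul_add_smul] at hderiv
  exact hderiv

lemma injOn_ellipseParam {t : ℝ} (ht : t ≠ 0) :
    Set.InjOn (ellipseParam t) (Set.Ico 0 (2 * π)) := by
  intro x hx y hy hxy
  have hcos : cos x = cos y := congrArg (fun p : Pt => p 0) hxy
  have hsin : sin x = sin y := mul_left_cancel₀ ht (congrArg (fun p : Pt => p 1) hxy)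
  have : Fact (0 < 2 * π) := ⟨two_pi_pos⟩
  exact (AddCircle.coe_eq_coe_iff_of_mem_Ico (by rwa [zero_add]) (by rwa [zero_add])).1
    (Real.Angle.cos_sin_inj hcos hsin)

lemma ellipseParam_mem {t : ℝ} (ht : t ≠ 0) (η : ℝ) :
    ellipseParam t η 0 ^ 2 + (ellipseParam t η 1 / t) ^ 2 = 1 := by
  rw [ellipseParam, pt_apply_zero, pt_apply_one, mul_div_cancel_left₀ _ ht, cos_sq_add_sin_sq]

lemma image_ellipseParam_Ico {t : ℝ} (ht : t ≠ 0) :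
    ellipseParam t '' Set.Ico 0 (2 * π) = {x | x 0 ^ 2 + (x 1 / t) ^ 2 = 1} := by
  have hper : Function.Periodic (ellipseParam t) (2 * π) := fun η => by
    rw [ellipseParam, cos_add_two_pi, sin_add_two_pi, ellipseParam]
  ext x
  constructor
  · rintro ⟨η, -, rfl⟩
    exact ellipseParam_mem ht η
  · intro hx
    have hnorm : ‖(⟨x 0, x 1 / t⟩ : ℂ)‖ = 1 := by
      rw [Complex.norm_eq_sqrt_sq_add_sq, hx, sqrt_one]
    obtain ⟨η, hη, harg⟩ := hper.exists_mem_Ico₀ two_pi_pos (Complex.arg ⟨x 0, x 1 / t⟩)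
    refine ⟨η, hη, ?_⟩
    rw [← harg, ellipseParam, Complex.cos_arg (norm_ne_zero_iff.1 (by simp [hnorm])),
      Complex.sin_arg, hnorm, div_one, div_one, mul_div_cancel₀ _ ht]
    ext i
    fin_cases i <;> rfl

lemma frontier_Eell (ξ : ℝ) :
    frontier (Eell ξ) = {x | x 0 ^ 2 + (x 1 / tanh ξ) ^ 2 = 1} := by
  have hquad : Continuous fun x : Pt => x 0 ^ 2 + (x 1 / tanh ξ) ^ 2 := by fun_prop
  refine (frontier_lt_subset_eq hquad continuous_const).antisymm fun x hx => ?_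
  rw [Set.mem_ofPred_eq] at hx
  rw [(isOpen_lt hquad continuous_const).frontier_eq]
  refine ⟨?_, hx.not_lt⟩
  have hray : Filter.Tendsto (fun r : ℝ => r • x) (nhdsWithin 1 (Set.Iio 1)) (nhds x) := by
    have hcont : ContinuousAt (fun r : ℝ => r • x) 1 := by fun_prop
    simpa only [one_smul] using hcont.tendsto.mono_left nhdsWithin_le_nhds
  refine mem_closure_of_tendsto hray ?_
  filter_upwards [Ioo_mem_nhdsLT zero_lt_one] with r hr
  calc (r • x) 0 ^ 2 + ((r • x) 1 / tanh ξ) ^ 2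
      = r ^ 2 * (x 0 ^ 2 + (x 1 / tanh ξ) ^ 2) := by
        simp only [PiLp.smul_apply, smul_eq_mul]
        ring
    _ < 1 := by
        rw [hx, mul_one]
        exact pow_lt_one₀ hr.1.le hr.2 two_ne_zero

lemma norm_gradient_Ψell_ellipseParam {ξ : ℝ} (hξ : 0 < ξ) (η : ℝ) :
    ‖gradient (Ψell ξ) (ellipseParam (tanh ξ) η)‖ =
      tanh ξ / (1 + tanh ξ) ^ 2 * ‖pt (-sin η) (tanh ξ * cos η)‖ := by
  have ht := real_tanh_pos hξ
  have hcoeff : 0 ≤ tanh ξ / (1 + tanh ξ) ^ 2 := by positivity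
  rw [(hasGradientAt_Ψell hξ (ellipseParam_mem ht.ne' η)).gradient, ellipseParam, pt_apply_zero,
    pt_apply_one, norm_pt, norm_pt, ← sqrt_sq hcoeff, ← sqrt_mul (sq_nonneg _)]
  ring_nf

lemma setIntegral_frontier_Eell_div_norm_gradient {ξ : ℝ} (hξ : 0 < ξ) (f : Pt → ℝ) :
    ∫ y in frontier (Eell ξ), f y / ‖gradient (Ψell ξ) y‖ ∂μH[1] =
      (1 + tanh ξ) ^ 2 / tanh ξ * ∫ η in 0..2 * π, f (ellipseParam (tanh ξ) η) := by
  have ht := real_tanh_pos hξ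
  have hspeed_pos : ∀ η, 0 < ‖pt (-sin η) (tanh ξ * cos η)‖ := fun η => by
    rw [norm_pt, neg_sq, mul_pow, add_comm]
    exact sqrt_pos.2 (ellipse_denom_pos ht.ne' η)
  have hspeed_cont : Continuous fun η => pt (-sin η) (tanh ξ * cos η) := by
    simp only [pt_eq_smul_add_smul (-sin _)]
    fun_prop
  rw [frontier_Eell, ← image_ellipseParam_Ico ht.ne', setIntegral_hausdorffMeasure_image_Ico
    (hasDerivAt_ellipseParam (tanh ξ)) hspeed_cont (injOn_ellipseParam ht.ne') two_pi_pos.le,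
    ← intervalIntegral.integral_const_mul]
  refine intervalIntegral.integral_congr fun η _ => ?_
  have hspeed := (hspeed_pos η).ne'
  simp only [norm_gradient_Ψell_ellipseParam hξ, smul_eq_mul]
  field_simp

end EllipseBoundary

/-! ### Convolution and Fourier coefficients on the circle -/

section CircleFourier

open AddCircle

variable {T : ℝ} [hT : Fact (0 < T)]

lemma eq_zero_of_fourierCoeff_eq_zero {f : AddCircle T → ℂ} (hf : Continuous f)
    (hzero : ∀ n, fourierCoeff f n = 0) : f = 0 := by
  ext θ
  have hsum := has_pointwise_sum_fourier_series_of_summable (f := ⟨f, hf⟩)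
    (summable_zero.congr fun n => (hzero n).symm) θ
  simp only [ContinuousMap.coe_mk, hzero, zero_smul] at hsum
  exact hsum.unique hasSum_zero

lemma fourierCoeff_convolution {f g : AddCircle T → ℂ} (hf : Integrable f haarAddCircle)
    (hg : Integrable g haarAddCircle) (n : ℤ) :
    fourierCoeff (convolution f g (ContinuousLinearMap.mul ℂ ℂ) haarAddCircle) n =
      fourierCoeff f n * fourierCoeff g n := by
  have hmodulate : ∀ θ, fourier (-n) θ •
      convolution f g (ContinuousLinearMap.mul ℂ ℂ) haarAddCircle θ =
        convolution (fun t => fourier (-n) t • f t) (fun t => fourier (-n) t • g t)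
          (ContinuousLinearMap.mul ℂ ℂ) haarAddCircle θ := fun θ => by
    rw [convolution_mul, convolution_mul, smul_eq_mul, ← integral_const_mul]
    congr 1
    ext t
    have hchar : fourier (-n) θ = fourier (-n) t * fourier (-n) (θ - t) := by
      rw [fourier_apply, fourier_apply, fourier_apply, ← Circle.coe_mul, ← toCircle_add,
        ← smul_add, add_sub_cancel]
    rw [hchar, smul_eq_mul, smul_eq_mul]
    ring
  rw [fourierCoeff, integral_congr_ae (.of_forall hmodulate),
    integral_convolution _ (hf.fourier_smul _) (hg.fourier_smul _), ContinuousLinearMap.mul_apply',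
    fourierCoeff, fourierCoeff]

lemma forall_add_convolution_eq_zero_iff {f g : AddCircle T → ℂ} (hf : Continuous f)
    (hg : Integrable g haarAddCircle) :
    (∀ θ, f θ + convolution f g (ContinuousLinearMap.mul ℂ ℂ) haarAddCircle θ = 0) ↔
      ∀ n, (1 + fourierCoeff g n) * fourierCoeff f n = 0 := by
  set h := convolution f g (ContinuousLinearMap.mul ℂ ℂ) haarAddCircle
  have hfint : Integrable f haarAddCircle := by
    simpa using hf.continuousOn.integrableOn_compact isCompact_univ
  have hcont : Continuous h :=
    BddAbove.continuous_convolution_left_of_integrable _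
      (isCompact_range hf.norm).bddAbove hf hg
  have hcoeff : ∀ n, fourierCoeff (f + h) n = (1 + fourierCoeff g n) * fourierCoeff f n :=
    fun n => by
      rw [fourierCoeff.add hfint (hfint.integrable_convolution _ hg),
        Pi.add_apply, fourierCoeff_convolution hfint hg]
      ring
  simp only [← hcoeff]
  constructor
  · intro hzero n
    have : f + h = 0 := funext hzero
    rw [this]
    simp [fourierCoeff]
  · exact fun hzero => congrFun (eq_zero_of_fourierCoeff_eq_zero (hf.add hcont) hzero)

lemma fourierCoeff_eq_of_hasSum {f : AddCircle T → ℂ} {c : ℤ → ℂ} (hc : Summable c)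
    (hf : ∀ θ, HasSum (fun m => c m * fourier m θ) (f θ)) (n : ℤ) : fourierCoeff f n = c n := by
  have hterm : ∀ m, ∫ θ, fourier (-n) θ • (c m * fourier m θ) ∂haarAddCircle =
      (Pi.single n (c n) : ℤ → ℂ) m := fun m => by
    have := congrFun (fourierCoeff_fourier (T := T) m) n
    rw [fourierCoeff] at this
    simp only [smul_eq_mul, mul_left_comm _ (c m), integral_const_mul] at this ⊢
    rw [this]
    rcases eq_or_ne m n with rfl | hmn
    · simp
    · simp [hmn.symm]
  have hsum := hasSum_integral_of_summable_integral_norm (μ := haarAddCircle)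
    (F := fun m (θ : AddCircle T) => fourier (-n) θ • (c m * fourier m θ))
    (fun m => by
      simpa using (Continuous.continuousOn (by fun_prop)).integrableOn_compact isCompact_univ)
    (by simpa [Circle.norm_coe] using hc.norm)
  simp only [hterm, tsum_const_smul'', (hf _).tsum_eq] at hsum
  exact hsum.unique (hasSum_pi_single n (c n))

lemma ae_haarAddCircle_ne (θ₀ : AddCircle T) : ∀ᵐ θ ∂haarAddCircle, θ ≠ θ₀ := by
  have : Nontrivial (AddCircle T) := nontrivial_of_ne ((T / (2 : ℕ) : ℝ) : AddCircle T) 0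
    fun hzero => by
      have := addOrderOf_period_div (p := T) two_pos
      simp only [hzero, addOrderOf_zero] at this
      omega
  have := ConnectedSpace.neBot_nhdsWithin_compl_of_nontrivial_of_t1space (0 : AddCircle T)
  exact haarAddCircle.ae_ne θ₀

lemma integral_haarAddCircle_eq_intervalIntegral (f : AddCircle T → ℝ) :
    ∫ θ, f θ ∂haarAddCircle = T⁻¹ * ∫ x in 0..T, f x := by
  rw [integral_haarAddCircle, ← AddCircle.intervalIntegral_preimage T 0, zero_add, smul_eq_mul]

lemma integrable_haarAddCircle_iff_intervalIntegrable {f : AddCircle T → ℂ}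
    (hf : AEStronglyMeasurable f haarAddCircle) :
    Integrable f haarAddCircle ↔ IntervalIntegrable (fun x : ℝ => f x) volume 0 T := by
  have hvol : (volume : Measure (AddCircle T)) = ENNReal.ofReal T • haarAddCircle :=
    volume_eq_smul_haarAddCircle
  have hpos : ENNReal.ofReal T ≠ 0 := by simpa using hT.out
  rw [intervalIntegrable_iff_integrableOn_Ioc_of_le hT.out.le,
    ← integrable_smul_measure hpos ENNReal.ofReal_ne_top, ← hvol]
  have := (AddCircle.measurePreserving_mk T 0).integrable_comp (g := f) (hvol ▸ hf.smul_measure _)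
  rw [zero_add] at this
  exact this.symm

/-- The substitution `β ↦ -β` turns a kernel in `α + β` into one in `α - β` on even functions. -/
lemma integral_mul_comp_sub_add_comp_add {f g₁ g₂ : AddCircle T → ℂ} (hf : Continuous f)
    (heven : ∀ β, f (-β) = f β) (hg₁ : Integrable g₁ haarAddCircle)
    (hg₂ : Integrable g₂ haarAddCircle) (α : AddCircle T) :
    ∫ β, f β * (g₁ (α - β) + g₂ (α + β)) ∂haarAddCircle =
      convolution f (g₁ + g₂) (ContinuousLinearMap.mul ℂ ℂ) haarAddCircle α := by
  have hexists : ∀ {g : AddCircle T → ℂ}, Integrable g haarAddCircle →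
      ConvolutionExistsAt f g α (ContinuousLinearMap.mul ℂ ℂ) haarAddCircle := fun hg =>
    (HasCompactSupport.of_compactSpace f).convolutionExists_left _ hf hg.locallyIntegrable α
  have hreflect : (fun β => f β * g₂ (α + β)) = fun β => f (-β) * g₂ (α - -β) := by
    simp only [heven, sub_neg_eq_add]
  have hreflected : Integrable (fun β => f β * g₂ (α + β)) haarAddCircle :=
    hreflect ▸ (hexists hg₂).integrable.comp_neg
  rw [(hexists hg₁).distrib_add (hexists hg₂), convolution_mul, convolution_mul,
    ← integral_neg_eq_self (fun β => f β * g₂ (α - β))]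
  simp only [mul_add, ← congrFun hreflect _]
  exact integral_add (hexists hg₁).integrable hreflected

end CircleFourier

/-! ### The logarithmic kernel on the ellipse -/

section EllipseLogKernel

open AddCircle

local instance fact_two_pi_pos : Fact (0 < 2 * π) := ⟨two_pi_pos⟩

/-- The logarithmic kernel `log |1 - r e^{iθ}|` on the circle, taken complex-valued so that it has
Fourier coefficients in the sense of `fourierCoeff`. -/
def logKernel (r : ℝ) (θ : AddCircle (2 * π)) : ℂ := Real.log ‖1 - r * (toCircle θ : ℂ)‖

lemma norm_ofReal_mul_toCircle {r : ℝ} (hr : 0 ≤ r) (θ : AddCircle (2 * π)) :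
    ‖(r * toCircle θ : ℂ)‖ = r := by
  rw [norm_mul, Circle.norm_coe, mul_one, Complex.norm_of_nonneg hr]

lemma toCircle_ne_one {θ : AddCircle (2 * π)} (hθ : θ ≠ 0) : (toCircle θ : ℂ) ≠ 1 := fun h =>
  hθ (injective_toCircle two_pi_pos.ne' (by rw [toCircle_zero]; exact Circle.ext h))

lemma one_sub_ofReal_mul_toCircle_ne_zero {r : ℝ} (hr : 0 ≤ r) (hr1 : r < 1)
    (θ : AddCircle (2 * π)) : (1 - r * toCircle θ : ℂ) ≠ 0 := fun h => by
  have := norm_ofReal_mul_toCircle hr θ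
  rw [← sub_eq_zero.1 h, norm_one] at this
  linarith

lemma continuous_logKernel {r : ℝ} (hr : 0 ≤ r) (hr1 : r < 1) : Continuous (logKernel r) := by
  refine Complex.continuous_ofReal.comp (Continuous.log ?_ fun θ =>
    norm_ne_zero_iff.2 (one_sub_ofReal_mul_toCircle_ne_zero hr hr1 θ))
  fun_prop

lemma measurable_logKernel (r : ℝ) : Measurable (logKernel r) := by
  unfold logKernel
  have : Continuous fun θ : AddCircle (2 * π) => (toCircle θ : ℂ) := by fun_prop
  fun_prop

/-- The coefficient at `n = 0` is `0`, by `x / 0 = 0`. -/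
lemma hasSum_logKernel {r : ℝ} (hr : 0 ≤ r) (hr1 : r < 1) (θ : AddCircle (2 * π)) :
    HasSum (fun n : ℤ => -(r ^ n.natAbs / (2 * n.natAbs) : ℂ) * fourier n θ) (logKernel r θ) := by
  set z : ℂ := r * toCircle θ with hz
  have hlog := Complex.hasSum_taylorSeries_neg_log
    (z := z) (by rwa [norm_ofReal_mul_toCircle hr])
  have hpow : ∀ n : ℕ, (r ^ n * fourier n θ : ℂ) = z ^ n := fun n => by
    rw [hz, mul_pow, fourier_apply, natCast_zsmul, toCircle_nsmul, Circle.coe_pow]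
  have hnonneg : HasSum (fun n : ℕ => -(r ^ n / (2 * n) : ℂ) * fourier n θ)
      (Complex.log (1 - z) / 2) := by
    have hterm : ∀ n : ℕ, -(r ^ n / (2 * n) : ℂ) * fourier n θ = -1 / 2 * (z ^ n / n) :=
      fun n => by rw [← hpow]; ring
    have hvalue : Complex.log (1 - z) / 2 = -1 / 2 * -Complex.log (1 - z) := by ring
    rw [funext hterm, hvalue]
    exact hlog.mul_left _
  have hneg : HasSum (fun n : ℕ => -(r ^ n / (2 * n) : ℂ) * fourier (-n) θ)
      (starRingEnd ℂ (Complex.log (1 - z)) / 2) := by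
    convert Complex.hasSum_conj'.2 hnonneg using 1
    · funext n
      rw [fourier_neg]
      simp [map_ofNat]
    · simp [map_ofNat]
  have hsum := HasSum.of_nat_of_neg
    (f := fun n : ℤ => -(r ^ n.natAbs / (2 * n.natAbs) : ℂ) * fourier n θ)
    (by simpa only [Int.natAbs_natCast] using hnonneg)
    (by simpa only [Int.natAbs_neg, Int.natAbs_natCast] using hneg)
  have hlog_norm : logKernel r θ = (Complex.log (1 - z)).re := by rw [Complex.log_re]; rfl
  rw [hlog_norm, Complex.re_eq_add_conj, add_div]
  simpa using hsum

lemma fourierCoeff_logKernel_of_lt_one {r : ℝ} (hr : 0 ≤ r) (hr1 : r < 1) (n : ℤ) :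
    fourierCoeff (logKernel r) n = -(r ^ n.natAbs / (2 * n.natAbs) : ℂ) := by
  refine fourierCoeff_eq_of_hasSum ?_ (hasSum_logKernel hr hr1) n
  simpa using (hasSum_logKernel hr hr1 0).summable

lemma integrable_logKernel {r : ℝ} (hr : 0 ≤ r) (hr1 : r ≤ 1) :
    Integrable (logKernel r) haarAddCircle := by
  rcases hr1.lt_or_eq with hlt | rfl
  · simpa using (continuous_logKernel hr hlt).continuousOn.integrableOn_compact isCompact_univ
  · rw [integrable_haarAddCircle_iff_intervalIntegrable
      (measurable_logKernel 1).aestronglyMeasurable]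
    have hcircle := circleIntegrable_log_norm_sub_const (a := (1 : ℂ)) (c := 0) 1
    refine IntervalIntegrable.congr_ae (f := fun x => ((Real.log ‖circleMap 0 1 x - 1‖ : ℝ) : ℂ)) ?_
      (.of_forall fun x => ?_)
    · exact ⟨hcircle.1.ofReal, hcircle.2.ofReal⟩
    · simp [logKernel, circleMap, toCircle_apply_mk, norm_sub_rev]

lemma norm_logKernel_le {r : ℝ} (hr : 0 ≤ r) (hr1 : r < 1) {θ : AddCircle (2 * π)} (hθ : θ ≠ 0) :
    ‖logKernel r θ‖ ≤ ‖logKernel 1 θ‖ + Real.log 2 := by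
  set z : ℂ := (toCircle θ : ℂ) with hz
  have hrz : ‖(r * z : ℂ)‖ = r := norm_ofReal_mul_toCircle hr θ
  have hpos : 0 < ‖1 - z‖ := norm_pos_iff.2 (sub_ne_zero.2 (toCircle_ne_one hθ).symm)
  have hpos_r : 0 < ‖1 - r * z‖ := norm_pos_iff.2 (one_sub_ofReal_mul_toCircle_ne_zero hr hr1 θ)
  have hle_two : ‖1 - r * z‖ ≤ 2 := (norm_sub_le _ _).trans (by rw [norm_one, hrz]; linarith)
  have hgap : 1 - r ≤ ‖1 - r * z‖ := by
    simpa only [norm_one, hrz] using norm_sub_norm_le (1 : ℂ) (r * z)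
  have hle : ‖1 - z‖ ≤ 2 * ‖1 - r * z‖ := by
    calc ‖1 - z‖ = ‖(1 - r * z) - ((1 - r : ℝ) : ℂ) * z‖ := by congr 1; push_cast; ring
      _ ≤ ‖1 - r * z‖ + (1 - r) := by
        grw [norm_sub_le, norm_ofReal_mul_toCircle (by linarith)]
      _ ≤ 2 * ‖1 - r * z‖ := by linarith
  have hupper : Real.log ‖1 - r * z‖ ≤ Real.log 2 := Real.log_le_log hpos_r hle_two
  have hlower : Real.log ‖1 - z‖ ≤ Real.log 2 + Real.log ‖1 - r * z‖ := by
    rw [← Real.log_mul two_ne_zero hpos_r.ne']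
    exact Real.log_le_log hpos hle
  rw [logKernel, logKernel, Complex.ofReal_one, one_mul, Complex.norm_real, Complex.norm_real,
    Real.norm_eq_abs, Real.norm_eq_abs, ← hz, abs_le]
  constructor <;> linarith [neg_abs_le (Real.log ‖1 - z‖), abs_nonneg (Real.log ‖1 - z‖)]

lemma continuousAt_logKernel_one {θ : AddCircle (2 * π)} (hθ : θ ≠ 0) :
    ContinuousAt (fun r => logKernel r θ) 1 := by
  refine Complex.continuous_ofReal.continuousAt.comp (ContinuousAt.log (by fun_prop) ?_)
  simpa [sub_eq_zero] using (toCircle_ne_one hθ).symm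

lemma fourierCoeff_logKernel {r : ℝ} (hr : 0 ≤ r) (hr1 : r ≤ 1) (n : ℤ) :
    fourierCoeff (logKernel r) n = -(r ^ n.natAbs / (2 * n.natAbs) : ℂ) := by
  rcases hr1.lt_or_eq with hlt | rfl
  · exact fourierCoeff_logKernel_of_lt_one hr hlt n
  have hev : ∀ᶠ r : ℝ in nhdsWithin 1 (Set.Iio 1), 0 ≤ r ∧ r < 1 := by
    filter_upwards [self_mem_nhdsWithin, Ioo_mem_nhdsLT (zero_lt_one' ℝ)] with r h1 h2
    exact ⟨h2.1.le, h1⟩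
  have hleft : Filter.Tendsto (fun r => fourierCoeff (logKernel r) n) (nhdsWithin 1 (Set.Iio 1))
      (nhds (fourierCoeff (logKernel 1) n)) := by
    refine tendsto_integral_filter_of_dominated_convergence
      (fun θ => ‖logKernel 1 θ‖ + Real.log 2) (.of_forall fun r => ?_) ?_ ?_ ?_
    · exact ((fourier (-n)).continuous.measurable.smul
        (measurable_logKernel r)).aestronglyMeasurable
    · filter_upwards [hev] with r hr
      filter_upwards [ae_haarAddCircle_ne 0] with θ hθ
      rw [norm_smul, fourier_apply, Circle.norm_coe, one_mul]
      exact norm_logKernel_le hr.1 hr.2 hθ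
    · exact (integrable_logKernel zero_le_one le_rfl).norm.add (integrable_const _)
    · filter_upwards [ae_haarAddCircle_ne 0] with θ hθ
      exact ((continuousAt_logKernel_one hθ).tendsto.mono_left nhdsWithin_le_nhds).const_smul _
  have hright : Filter.Tendsto (fun r : ℝ => -(r ^ n.natAbs / (2 * n.natAbs) : ℂ))
      (nhdsWithin 1 (Set.Iio 1)) (nhds (-((1 : ℝ) ^ n.natAbs / (2 * n.natAbs)))) :=
    tendsto_nhdsWithin_of_tendsto_nhds (Continuous.tendsto (by fun_prop) 1)
  refine tendsto_nhds_unique hleft (hright.congr' ?_)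
  filter_upwards [hev] with r hr
  exact (fourierCoeff_logKernel_of_lt_one hr.1 hr.2 n).symm

/-- The point `(cos θ, t sin θ)` of the ellipse with semi-axes `1` and `t`, as a function of the
angle `θ` modulo `2π`. -/
def ellipsePoint (t : ℝ) (θ : AddCircle (2 * π)) : Pt :=
  pt (toCircle θ : ℂ).re (t * (toCircle θ : ℂ).im)

lemma ellipsePoint_coe (t η : ℝ) : ellipsePoint t (η : AddCircle (2 * π)) = ellipseParam t η := by
  rw [ellipsePoint, toCircle_apply_mk, div_self two_pi_pos.ne', one_mul, Circle.coe_exp,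
    Complex.exp_ofReal_mul_I_re, Complex.exp_ofReal_mul_I_im, ellipseParam]

lemma continuous_ellipsePoint (t : ℝ) : Continuous (ellipsePoint t) := by
  unfold ellipsePoint
  simp only [pt_eq_smul_add_smul (Complex.re _)]
  fun_prop

lemma ellipsePoint_neg (t : ℝ) (θ : AddCircle (2 * π)) :
    ellipsePoint t (-θ) = pt (ellipsePoint t θ 0) (-(ellipsePoint t θ 1)) := by
  simp only [ellipsePoint, toCircle_neg, Circle.coe_inv_eq_conj, Complex.conj_re, Complex.conj_im,
    mul_neg, pt_apply_zero, pt_apply_one]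

lemma range_ellipsePoint {ξ : ℝ} (hξ : 0 < ξ) :
    Set.range (ellipsePoint (tanh ξ)) = frontier (Eell ξ) := by
  have ht := (real_tanh_pos hξ).ne'
  rw [frontier_Eell]
  ext x
  constructor
  · rintro ⟨θ, rfl⟩
    induction θ using QuotientAddGroup.induction_on with
    | H η => exact ellipsePoint_coe (tanh ξ) η ▸ ellipseParam_mem ht η
  · rw [← image_ellipseParam_Ico ht]
    rintro ⟨η, -, rfl⟩
    exact ⟨η, ellipsePoint_coe _ η⟩

/-- In complex coordinates the ellipse is the image of the unit circle under the Joukowski map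
`u ↦ (1+t)/2 u + (1-t)/2 u⁻¹`, whose divided differences factor. -/
lemma norm_ellipsePoint_sub {t q : ℝ} (htq : (1 + q) * (1 + t) = 2) (hq : 0 ≤ q)
    (α β : AddCircle (2 * π)) :
    ‖ellipsePoint t α - ellipsePoint t β‖ =
      ‖1 - (toCircle (α - β) : ℂ)‖ * ‖1 - q * (toCircle (α + β) : ℂ)‖ / (1 + q) := by
  have hcoord : ∀ θ, complexEquivPt.symm (ellipsePoint t θ) =
      (toCircle θ + q * (toCircle (-θ) : ℂ)) / (1 + q : ℝ) := fun θ => by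
    rw [complexEquivPt_symm_apply, toCircle_neg, Circle.coe_inv_eq_conj]
    have hne : 1 + q ≠ 0 := by positivity
    apply Complex.ext
    · rw [Complex.div_ofReal_re]
      simp only [ellipsePoint, pt_apply_zero, Complex.add_re, Complex.re_ofReal_mul,
        Complex.conj_re]
      field_simp
    · rw [Complex.div_ofReal_im]
      simp only [ellipsePoint, pt_apply_one, Complex.add_im, Complex.im_ofReal_mul,
        Complex.conj_im]
      field_simp
      linear_combination (toCircle θ : ℂ).im * htq
  have hfactor : (toCircle α + q * toCircle (-α) - (toCircle β + q * toCircle (-β)) : ℂ) =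
      -toCircle β * (1 - toCircle (α - β)) * (1 - q * toCircle (-(α + β))) := by
    have hα : (toCircle α : ℂ) ≠ 0 := Circle.coe_ne_zero _
    have hβ : (toCircle β : ℂ) ≠ 0 := Circle.coe_ne_zero _
    simp only [sub_eq_add_neg α, toCircle_add, toCircle_neg, Circle.coe_mul, Circle.coe_inv]
    field_simp
    ring
  have hconj : ‖1 - q * (toCircle (-(α + β)) : ℂ)‖ = ‖1 - q * (toCircle (α + β) : ℂ)‖ := by
    rw [← Complex.norm_conj, toCircle_neg, Circle.coe_inv_eq_conj]
    simp
  rw [← complexEquivPt.symm.norm_map, map_sub, hcoord, hcoord, ← sub_div, hfactor, norm_div,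
    norm_mul, norm_mul, norm_neg, Circle.norm_coe, one_mul, hconj,
    Complex.norm_of_nonneg (by positivity)]

lemma log_norm_ellipsePoint_sub {t q : ℝ} (htq : (1 + q) * (1 + t) = 2) (hq : 0 ≤ q) (hq1 : q < 1)
    {α β : AddCircle (2 * π)} (hαβ : α ≠ β) :
    (Real.log ‖ellipsePoint t α - ellipsePoint t β‖ : ℂ) =
      logKernel 1 (α - β) - Real.log (1 + q) + logKernel q (α + β) := by
  have hfar : ‖1 - (toCircle (α - β) : ℂ)‖ ≠ 0 :=
    norm_ne_zero_iff.2 (sub_ne_zero.2 (toCircle_ne_one (sub_ne_zero.2 hαβ)).symm)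
  have hconj : ‖1 - q * (toCircle (α + β) : ℂ)‖ ≠ 0 :=
    norm_ne_zero_iff.2 (one_sub_ofReal_mul_toCircle_ne_zero hq hq1 _)
  rw [norm_ellipsePoint_sub htq hq, Real.log_div (mul_ne_zero hfar hconj) (by positivity),
    Real.log_mul hfar hconj, logKernel, logKernel, Complex.ofReal_one, one_mul]
  push_cast
  ring

/-- The convolution kernel representing the logarithmic potential of even densities on an
ellipse; `q = (1 - t) / (1 + t)` for the ellipse with semi-axes `1` and `t`. -/
def ellipseLogKernel (q : ℝ) : AddCircle (2 * π) → ℂ :=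
  (fun θ => logKernel 1 θ - Real.log (1 + q)) + logKernel q

lemma integrable_logKernel_one_sub_const (c : ℂ) :
    Integrable (fun θ => logKernel 1 θ - c) haarAddCircle :=
  (integrable_logKernel zero_le_one le_rfl).sub (integrable_const _)

lemma integrable_ellipseLogKernel {q : ℝ} (hq : 0 ≤ q) (hq1 : q ≤ 1) :
    Integrable (ellipseLogKernel q) haarAddCircle :=
  (integrable_logKernel_one_sub_const _).add (integrable_logKernel hq hq1)

lemma fourierCoeff_ellipseLogKernel {q : ℝ} (hq : 0 ≤ q) (hq1 : q ≤ 1) (n : ℤ) :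
    fourierCoeff (ellipseLogKernel q) n =
      -((1 + q ^ n.natAbs) / (2 * n.natAbs)) - (Pi.single 0 (Real.log (1 + q)) : ℤ → ℝ) n := by
  have hconst : (fun θ => logKernel 1 θ - Real.log (1 + q)) =
      logKernel 1 + (-Real.log (1 + q) : ℂ) • (fourier 0 : AddCircle (2 * π) → ℂ) := by
    ext θ
    simp [sub_eq_add_neg]
  have hmonomial : fourierCoeff (fourier 0 : AddCircle (2 * π) → ℂ) n =
      (Pi.single 0 1 : ℤ → ℂ) n :=
    congrFun (fourierCoeff_fourier 0) n
  rw [ellipseLogKernel, fourierCoeff.add (integrable_logKernel_one_sub_const _)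
    (integrable_logKernel hq hq1), hconst,
    fourierCoeff.add (integrable_logKernel zero_le_one le_rfl)
    ((fourier 0).continuous.const_smul _ |>.integrable_of_hasCompactSupport
      (HasCompactSupport.of_compactSpace _)), Pi.add_apply, Pi.add_apply, fourierCoeff.const_smul,
    hmonomial, fourierCoeff_logKernel zero_le_one le_rfl, fourierCoeff_logKernel hq hq1]
  rcases eq_or_ne n 0 with rfl | hn
  · simp
  · simp only [Complex.ofReal_one, one_pow, Nat.cast_natAbs, Pi.single_eq_of_ne hn, smul_eq_mul,
      mul_zero, add_zero, Complex.ofReal_zero, sub_zero]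
    ring

lemma integral_mul_log_norm_ellipsePoint_sub {t q : ℝ} (htq : (1 + q) * (1 + t) = 2) (hq : 0 ≤ q)
    (hq1 : q < 1) {f : AddCircle (2 * π) → ℂ} (hf : Continuous f) (heven : ∀ β, f (-β) = f β)
    (α : AddCircle (2 * π)) :
    ∫ β, f β * Real.log ‖ellipsePoint t α - ellipsePoint t β‖ ∂haarAddCircle =
      convolution f (ellipseLogKernel q) (ContinuousLinearMap.mul ℂ ℂ) haarAddCircle α := by
  rw [ellipseLogKernel, ← integral_mul_comp_sub_add_comp_add hf heven
    (integrable_logKernel_one_sub_const _) (integrable_logKernel hq hq1.le)]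
  refine integral_congr_ae ?_
  filter_upwards [ae_haarAddCircle_ne α] with β hβ
  rw [log_norm_ellipsePoint_sub htq hq hq1 hβ.symm]

lemma one_add_exp_mul_one_add_tanh (ξ : ℝ) : (1 + exp (-(2 * ξ))) * (1 + tanh ξ) = 2 := by
  have hexp : exp (-(2 * ξ)) = exp (-ξ) / exp ξ := by
    rw [← exp_sub]
    ring_nf
  rw [hexp, tanh_eq_sinh_div_cosh, cosh_eq, sinh_eq]
  field_simp
  ring

lemma one_add_tanh_sq_div_tanh {ξ : ℝ} (hξ : 0 < ξ) :
    (1 + tanh ξ) ^ 2 / tanh ξ = 2 * exp (2 * ξ) / sinh (2 * ξ) := by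
  have hsinh : sinh ξ ≠ 0 := (sinh_pos_iff.2 hξ).ne'
  have hcosh : cosh ξ ≠ 0 := (cosh_pos ξ).ne'
  rw [two_mul ξ, exp_add, ← cosh_add_sinh, ← two_mul, sinh_two_mul, tanh_eq_sinh_div_cosh]
  field_simp

lemma setIntegral_log_norm_sub_mul_eq_convolution {ξ : ℝ} (hξ : 0 < ξ) {φ : Pt → ℝ}
    (hcont : ContinuousOn φ (frontier (Eell ξ)))
    (hsym : ∀ x ∈ frontier (Eell ξ), φ x = φ (pt (x 0) (-(x 1)))) (α : AddCircle (2 * π)) :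
    ((∫ y in frontier (Eell ξ), (1 / (2 * π)) * Real.log ‖ellipsePoint (tanh ξ) α - y‖ *
      (φ y / ‖gradient (Ψell ξ) y‖) ∂μH[1] : ℝ) : ℂ) =
      ((1 + tanh ξ) ^ 2 / tanh ξ : ℝ) * convolution (fun θ => (φ (ellipsePoint (tanh ξ) θ) : ℂ))
        (ellipseLogKernel (exp (-(2 * ξ)))) (ContinuousLinearMap.mul ℂ ℂ) haarAddCircle α := by
  have hmem : ∀ θ, ellipsePoint (tanh ξ) θ ∈ frontier (Eell ξ) := fun θ =>
    range_ellipsePoint hξ ▸ Set.mem_range_self θ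
  have hcircle : Continuous fun θ => (φ (ellipsePoint (tanh ξ) θ) : ℂ) :=
    Complex.continuous_ofReal.comp (hcont.comp_continuous (continuous_ellipsePoint _) hmem)
  have heven : ∀ θ, (φ (ellipsePoint (tanh ξ) (-θ)) : ℂ) = φ (ellipsePoint (tanh ξ) θ) :=
    fun θ => by rw [ellipsePoint_neg, ← hsym _ (hmem θ)]
  rw [← integral_mul_log_norm_ellipsePoint_sub (one_add_exp_mul_one_add_tanh ξ) (exp_pos _).le
    (by simpa) hcircle heven]
  simp only [← mul_div_assoc, ← Complex.ofReal_mul, integral_complex_ofReal]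
  rw [setIntegral_frontier_Eell_div_norm_gradient hξ,
    integral_haarAddCircle_eq_intervalIntegral]
  simp only [ellipsePoint_coe, one_div, mul_assoc, mul_comm (φ _),
    intervalIntegral.integral_const_mul]

/-- The eigenvalues of `φ ↦ φ + ∫ (1/2π) log ‖· - y‖ φ(y) / ‖∇Ψ(y)‖ dℋ¹(y)` on even functions, in
the Fourier basis of the boundary angle. -/
def kirchhoffMultiplier (ξ : ℝ) (k : ℤ) : ℂ :=
  1 + ((1 + tanh ξ) ^ 2 / tanh ξ : ℝ) * fourierCoeff (ellipseLogKernel (exp (-(2 * ξ)))) k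

lemma forall_frontier_Eell_eq_zero_iff {ξ : ℝ} (hξ : 0 < ξ) {φ : Pt → ℝ}
    (hcont : ContinuousOn φ (frontier (Eell ξ)))
    (hsym : ∀ x ∈ frontier (Eell ξ), φ x = φ (pt (x 0) (-(x 1)))) :
    (∀ x ∈ frontier (Eell ξ), φ x + ∫ y in frontier (Eell ξ),
      (1 / (2 * π)) * Real.log ‖x - y‖ * (φ y / ‖gradient (Ψell ξ) y‖) ∂μH[1] = 0) ↔
      ∀ k, kirchhoffMultiplier ξ k *
        fourierCoeff (fun θ => (φ (ellipsePoint (tanh ξ) θ) : ℂ)) k = 0 := by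
  have hcircle : Continuous fun θ => (φ (ellipsePoint (tanh ξ) θ) : ℂ) :=
    Complex.continuous_ofReal.comp (hcont.comp_continuous (continuous_ellipsePoint _) fun θ =>
      range_ellipsePoint hξ ▸ Set.mem_range_self θ)
  have hkernel := (integrable_ellipseLogKernel (exp_pos (-(2 * ξ))).le (by simpa using hξ.le)).smul
    (((1 + tanh ξ) ^ 2 / tanh ξ : ℝ) : ℂ)
  have hchar := forall_add_convolution_eq_zero_iff hcircle hkernel
  simp only [fourierCoeff.const_smul, smul_eq_mul, ← kirchhoffMultiplier.eq_1] at hchar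
  rw [← hchar, ← range_ellipsePoint hξ, Set.forall_mem_range, range_ellipsePoint hξ]
  refine forall_congr' fun α => ?_
  rw [convolution_smul, Pi.smul_apply, smul_eq_mul,
    ← setIntegral_log_norm_sub_mul_eq_convolution hξ hcont hsym, ← Complex.ofReal_add,
    Complex.ofReal_eq_zero]

lemma fourierCoeff_eq_integral_mul_exp (f : AddCircle (2 * π) → ℂ) (k : ℤ) :
    fourierCoeff f k =
      (1 / (2 * π) : ℂ) * ∫ η in (0 : ℝ)..2 * π, f η * Complex.exp (-Complex.I * k * η) := by
  have hchar : ∀ η : ℝ, fourier (-k) (η : AddCircle (2 * π)) = Complex.exp (-Complex.I * k * η) :=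
    fun η => by
      rw [fourier_coe_apply]
      congr 1
      push_cast
      field_simp
  rw [fourierCoeff_eq_intervalIntegral f k 0, zero_add, Complex.real_smul]
  push_cast
  simp only [hchar, smul_eq_mul, mul_comm (f _)]

lemma sinh_mul_kirchhoffMultiplier_zero {ξ : ℝ} (hξ : 0 < ξ) :
    sinh (2 * ξ) * kirchhoffMultiplier ξ 0 =
      ((sinh (2 * ξ) - 2 * exp (2 * ξ) * Real.log (1 + exp (-(2 * ξ))) : ℝ) : ℂ) := by
  have hsinh : sinh (2 * ξ) ≠ 0 := (sinh_pos_iff.2 (by positivity)).ne'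
  rw [kirchhoffMultiplier, fourierCoeff_ellipseLogKernel (exp_pos _).le (by simpa using hξ.le),
    one_add_tanh_sq_div_tanh hξ, Pi.single_eq_same, Int.natAbs_zero, Nat.cast_zero, mul_zero,
    div_zero]
  norm_cast
  field_simp
  ring

lemma abs_mul_sinh_mul_kirchhoffMultiplier {ξ : ℝ} (hξ : 0 < ξ) {k : ℤ} (hk : k ≠ 0) :
    (|(k : ℝ)| * sinh (2 * ξ) : ℝ) * kirchhoffMultiplier ξ k =
      ((|(k : ℝ)| * sinh (2 * ξ) - exp (2 * ξ) * (1 + exp (-(2 * ξ * |(k : ℝ)|))) : ℝ) : ℂ) := by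
  have hsinh : sinh (2 * ξ) ≠ 0 := (sinh_pos_iff.2 (by positivity)).ne'
  have hk_abs : (k.natAbs : ℝ) = |(k : ℝ)| := by rw [Nat.cast_natAbs, Int.cast_abs]
  have hk_ne : |(k : ℝ)| ≠ 0 := by simpa
  have hpow : exp (-(2 * ξ)) ^ k.natAbs = exp (-(2 * ξ * |(k : ℝ)|)) := by
    rw [← exp_nat_mul, hk_abs]
    ring_nf
  rw [kirchhoffMultiplier, fourierCoeff_ellipseLogKernel (exp_pos _).le (by simpa using hξ.le),
    one_add_tanh_sq_div_tanh hξ, Pi.single_eq_of_ne hk, ← hpow, ← hk_abs]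
  rw [← hk_abs] at hk_ne
  norm_cast
  simp only [Nat.cast_mul, Nat.cast_ofNat]
  field_simp
  ring

lemma kirchhoffMultiplier_zero_mul_eq_zero_iff {ξ : ℝ} (hξ : 0 < ξ) (c : ℂ) :
    kirchhoffMultiplier ξ 0 * c = 0 ↔
      ((sinh (2 * ξ) - 2 * exp (2 * ξ) * Real.log (1 + exp (-(2 * ξ))) : ℝ) : ℂ) * c = 0 := by
  have hsinh : (sinh (2 * ξ) : ℂ) ≠ 0 :=
    Complex.ofReal_ne_zero.2 (sinh_pos_iff.2 (by positivity)).ne'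
  rw [← sinh_mul_kirchhoffMultiplier_zero hξ, mul_assoc, mul_eq_zero_iff_left hsinh]

lemma kirchhoffMultiplier_mul_eq_zero_iff {ξ : ℝ} (hξ : 0 < ξ) {k : ℤ} (hk : k ≠ 0) (c : ℂ) :
    kirchhoffMultiplier ξ k * c = 0 ↔
      ((|(k : ℝ)| * sinh (2 * ξ) - exp (2 * ξ) * (1 + exp (-(2 * ξ * |(k : ℝ)|))) : ℝ) : ℂ) * c =
        0 := by
  have hfactor : ((|(k : ℝ)| * sinh (2 * ξ) : ℝ) : ℂ) ≠ 0 :=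
    Complex.ofReal_ne_zero.2 (mul_ne_zero (by simpa) (sinh_pos_iff.2 (by positivity)).ne')
  rw [← abs_mul_sinh_mul_kirchhoffMultiplier hξ hk, mul_assoc, mul_eq_zero_iff_left hfactor]

theorem kirchhoff_nondegeneracy_fourier_characterization_general
    (ξ : ℝ) (hξ : 0 < ξ) (φ : Pt → ℝ)
    (hcont : ContinuousOn φ (frontier (Eell ξ)))
    (hsym : ∀ x ∈ frontier (Eell ξ), φ x = φ (pt (x 0) (-(x 1))))
    (ρ : ℝ → ℝ) (hρ : ∀ η : ℝ, ρ η = φ (pt (Real.cos η) (Real.tanh ξ * Real.sin η)))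
    (ρhat : ℤ → ℂ)
    (hρhat : ∀ k : ℤ, ρhat k = (1 / (2 * π) : ℂ) *
      ∫ η in (0 : ℝ)..(2 * π), (ρ η : ℂ) * Complex.exp (-Complex.I * k * η)) :
    (∀ x ∈ frontier (Eell ξ),
        φ x + ∫ y in frontier (Eell ξ),
          (1 / (2 * π)) * Real.log ‖x - y‖ * (φ y / ‖gradient (Ψell ξ) y‖) ∂μH[1] = 0) ↔
      (((Real.sinh (2 * ξ) - 2 * Real.exp (2 * ξ) * Real.log (1 + Real.exp (-(2 * ξ))) : ℝ) : ℂ) *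
          ρhat 0 = 0 ∧
        ∀ k : ℤ, k ≠ 0 →
          ((|(k : ℝ)| * Real.sinh (2 * ξ) -
              Real.exp (2 * ξ) * (1 + Real.exp (-(2 * ξ * |(k : ℝ)|))) : ℝ) : ℂ) *
            ρhat k = 0) := by
  have hcoeff : ∀ k, fourierCoeff (fun θ => (φ (ellipsePoint (tanh ξ) θ) : ℂ)) k = ρhat k :=
    fun k => by
      rw [fourierCoeff_eq_integral_mul_exp, hρhat]
      simp only [ellipsePoint_coe, ellipseParam, hρ]
  have hzero := kirchhoffMultiplier_zero_mul_eq_zero_iff hξ (ρhat 0)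
  have hmodes := forall₂_congr fun k (hk : k ≠ 0) =>
    kirchhoffMultiplier_mul_eq_zero_iff hξ hk (ρhat k)
  rw [forall_frontier_Eell_eq_zero_iff hξ hcont hsym, ← hzero, ← hmodes]
  simp only [hcoeff]
  refine ⟨fun h => ⟨h 0, fun k _ => h k⟩, fun h k => ?_⟩
  rcases eq_or_ne k 0 with rfl | hk
  exacts [h.1, h.2 k hk]

end EllipseLogKernel

/-- **Nondegeneracy on Kirchhoff stream functions, I** (Fourier
characterization of the kernel of the linearized operator). -/
theorem kirchhoff_nondegeneracy_fourier_characterization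
    (ξ : ℝ) (hξ : 0 < ξ) (φ : Pt → ℝ)
    (hcont : ContinuousOn φ (frontier (Eell ξ)))
    (hsym : ∀ x ∈ frontier (Eell ξ),
      φ x = φ (pt (x 0) (-(x 1))) ∧ φ x = φ (pt (-(x 0)) (-(x 1))))
    (ρ : ℝ → ℝ) (hρ : ∀ η : ℝ, ρ η = φ (pt (Real.cos η) (Real.tanh ξ * Real.sin η)))
    (ρhat : ℤ → ℂ)
    (hρhat : ∀ k : ℤ, ρhat k = (1 / (2 * π) : ℂ) *
      ∫ η in (0 : ℝ)..(2 * π), (ρ η : ℂ) * Complex.exp (-Complex.I * k * η)) :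
    (∀ x ∈ frontier (Eell ξ),
        φ x + ∫ y in frontier (Eell ξ),
          (1 / (2 * π)) * Real.log ‖x - y‖ * (φ y / ‖gradient (Ψell ξ) y‖) ∂μH[1] = 0) ↔
      (((Real.sinh (2 * ξ) - 2 * Real.exp (2 * ξ) * Real.log (1 + Real.exp (-(2 * ξ))) : ℝ) : ℂ) *
          ρhat 0 = 0 ∧
        ∀ k : ℤ, k ≠ 0 →
          ((|(k : ℝ)| * Real.sinh (2 * ξ) -
              Real.exp (2 * ξ) * (1 + Real.exp (-(2 * ξ * |(k : ℝ)|))) : ℝ) : ℂ) *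
            ρhat k = 0) := by
  exact kirchhoff_nondegeneracy_fourier_characterization_general ξ hξ φ hcont
    (fun x hx => (hsym x hx).1) ρ hρ ρhat hρhat
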